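/- arXiv:0911.4683 — 2 statements merged into one kernel-verified Lean document; each statement's English description precedes it below -/
import Mathlib

section
/- Let μ be a Borel measure on ℝ with μ({0}) = 0 and ∫_ℝ min(1,u²) μ(du) < ∞, satisfying μ((0,∞)) > 0 and ∫_{|u|≥1} e^{Cu} μ(du) < ∞ for every C ∈ ℝ. Let I ⊆ ℝ be an interval and f : I → ℝ a bounded measurable function with 0 < ∫_I f(s)² ds < ∞, and assume there is a compact interval [a,b] ⊆ I on which f is positive and continuously differentiable with nonvanishing derivative. Then there exist q > 0 and ϑ > 0 such that for every ε > 0 and every z with |z| ≥ ε one has Θ(z,[q,∞)) ≥ ϑ · min(ε², 1). -/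
open MeasureTheory Filter Set

/-- `Θ(z,A) = ∫_I ∫_ℝ 1_{f(s)u ∈ A} (1 − cos(f(s)zu)) μ(du) ds`. -/
noncomputable def kernelTheta (μ : Measure ℝ) (I : Set ℝ) (f : ℝ → ℝ) (z : ℝ) (A : Set ℝ) : ℝ :=
  ∫ s in I, ∫ u, A.indicator (fun _ => (1 : ℝ)) (f s * u) * (1 - Real.cos (f s * z * u)) ∂μ

lemma aux_sin_nat (n : ℕ) (y : ℝ) : |Real.sin (n * y)| ≤ n * |Real.sin y| := by
  induction n with
  | zero => simp
  | succ k ih =>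
    have h1 : ((k + 1 : ℕ) : ℝ) * y = k * y + y := by push_cast; ring
    rw [h1, Real.sin_add]
    have h2 := Real.abs_cos_le_one y
    have h3 := Real.abs_cos_le_one (k * y)
    calc _ ≤ |Real.sin (k * y) * Real.cos y| + |Real.cos (k * y) * Real.sin y| := abs_add_le _ _
      _ ≤ |Real.sin (k * y)| * 1 + 1 * |Real.sin y| := by
        rw [abs_mul, abs_mul]; gcongr
      _ ≤ _ := by push_cast; linarith

lemma aux_cos_nat (n : ℕ) (x : ℝ) : 1 - Real.cos (n * x) ≤ n ^ 2 * (1 - Real.cos x) := by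
  have key : ∀ y : ℝ, 1 - Real.cos y = 2 * |Real.sin (y / 2)| ^ 2 := by
    intro y
    have h : y = 2 * (y / 2) := by ring
    rw [sq_abs]
    conv_lhs => rw [h, Real.cos_two_mul]
    have := Real.sin_sq_add_cos_sq (y / 2)
    linarith
  rw [key, key x]
  have h := aux_sin_nat n (x / 2)
  rw [show (n : ℝ) * x / 2 = n * (x / 2) by ring]
  have := pow_le_pow_left₀ (abs_nonneg _) h 2
  rw [mul_pow] at this
  linarith

lemma aux_osc (f : ℝ → ℝ) (a b : ℝ) (hab : a < b)
    (hfC1 : ContDiffOn ℝ 1 f (Set.Icc a b))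
    (hfderiv : ∀ s ∈ Set.Icc a b, derivWithin f (Set.Icc a b) s ≠ 0) :
    ∃ κ > (0 : ℝ), ∀ w : ℝ, κ * min 1 (w ^ 2) ≤ ∫ s in Set.Icc a b, (1 - Real.cos (w * f s)) := by
  have hfc : ContinuousOn f (Icc a b) := hfC1.continuousOn
  have hdc : ContinuousOn (derivWithin f (Icc a b)) (Icc a b) :=
    hfC1.continuousOn_derivWithin (uniqueDiffOn_Icc hab) le_rfl
  have hder : ∀ x ∈ Ioo a b, HasDerivAt f (derivWithin f (Icc a b) x) x := by
    intro x hx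
    have h1 := (hfC1.differentiableOn one_ne_zero x (Ioo_subset_Icc_self hx)).hasDerivWithinAt
    exact h1.hasDerivAt (Icc_mem_nhds hx.1 hx.2)
  obtain ⟨M0, hM0⟩ := isCompact_Icc.exists_bound_of_continuousOn hdc
  set M := |M0| + 1 with hM
  have hMpos : 0 < M := by positivity
  have hMb : ∀ x ∈ Icc a b, |derivWithin f (Icc a b) x| ≤ M := by
    intro x hx
    have := hM0 x hx
    rw [Real.norm_eq_abs] at this
    have := le_abs_self M0
    linarith
  have hne : f a ≠ f b := by
    intro h
    obtain ⟨c, hc, hc'⟩ := exists_deriv_eq_zero hab hfc h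
    apply hfderiv c (Ioo_subset_Icc_self hc)
    rw [← (hder c hc).deriv, hc']
  set L := |f b - f a| with hL
  have hLpos : 0 < L := abs_pos.2 (sub_ne_zero.2 hne.symm)
  have hci : ∀ w : ℝ, ContinuousOn (fun s => 1 - Real.cos (w * f s)) (Icc a b) := by
    intro w
    exact continuousOn_const.sub (Real.continuous_cos.comp_continuousOn (continuousOn_const.mul hfc))
  have hint : ∀ w : ℝ, IntegrableOn (fun s => 1 - Real.cos (w * f s)) (Icc a b) :=
    fun w => (hci w).integrableOn_Icc
  -- large frequencies
  have hbig : ∀ w : ℝ, 4 / L ≤ |w| →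
      L / (2 * M) ≤ ∫ s in Set.Icc a b, (1 - Real.cos (w * f s)) := by
    intro w hw
    have hw0 : 0 < |w| := lt_of_lt_of_le (by positivity) hw
    have hwne : w ≠ 0 := abs_pos.1 hw0
    have hFc : ContinuousOn (fun s => f s - Real.sin (w * f s) / w) (Icc a b) :=
      hfc.sub ((Real.continuous_sin.comp_continuousOn (continuousOn_const.mul hfc)).div_const w)
    have hpc : ContinuousOn (fun s => (1 - Real.cos (w * f s)) * derivWithin f (Icc a b) s)
      (Icc a b) := (hci w).mul hdc
    have hftc := intervalIntegral.integral_eq_sub_of_hasDerivAt_of_le hab.le hFc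
      (f' := fun s => (1 - Real.cos (w * f s)) * derivWithin f (Icc a b) s)
      (by
        intro x hx
        have h1 := hder x hx
        have h2 := h1.sub (((h1.const_mul w).sin).div_const w)
        have e : (1 - Real.cos (w * f x)) * derivWithin f (Icc a b) x =
            derivWithin f (Icc a b) x -
              Real.cos (w * f x) * (w * derivWithin f (Icc a b) x) / w := by
          generalize Real.cos (w * f x) = C
          generalize derivWithin f (Icc a b) x = D
          field_simp
        change HasDerivAt _ ((1 - Real.cos (w * f x)) * derivWithin f (Icc a b) x) x
        rw [e]
        exact h2)
      (by
        apply ContinuousOn.intervalIntegrable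
        rwa [uIcc_of_le hab.le])
    rw [intervalIntegral.integral_of_le hab.le, ← integral_Icc_eq_integral_Ioc] at hftc
    have hub : |∫ s in Icc a b, (1 - Real.cos (w * f s)) * derivWithin f (Icc a b) s|
        ≤ M * ∫ s in Icc a b, (1 - Real.cos (w * f s)) := by
      rw [← integral_const_mul]
      refine (abs_integral_le_integral_abs).trans ?_
      refine setIntegral_mono_on (hpc.abs.integrableOn_Icc) ((hint w).const_mul M)
        measurableSet_Icc ?_
      intro x hx
      have h0 : 0 ≤ 1 - Real.cos (w * f x) := by linarith [Real.cos_le_one (w * f x)]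
      rw [abs_mul, abs_of_nonneg h0, mul_comm]
      exact mul_le_mul_of_nonneg_right (hMb x hx) h0
    rw [hftc] at hub
    have hlow : L - 2 / |w| ≤ |f b - Real.sin (w * f b) / w - (f a - Real.sin (w * f a) / w)| := by
      have e : f b - Real.sin (w * f b) / w - (f a - Real.sin (w * f a) / w)
        = (f b - f a) - (Real.sin (w * f b) - Real.sin (w * f a)) / w := by ring
      rw [e]
      have h1 := abs_sub_abs_le_abs_sub (f b - f a) ((Real.sin (w * f b) - Real.sin (w * f a)) / w)
      have h2 : |(Real.sin (w * f b) - Real.sin (w * f a)) / w| ≤ 2 / |w| := by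
        rw [abs_div]
        gcongr
        have := Real.abs_sin_le_one (w * f b)
        have := Real.abs_sin_le_one (w * f a)
        have := abs_sub (Real.sin (w * f b)) (Real.sin (w * f a))
        linarith
      linarith
    have h3 : 2 / |w| ≤ L / 2 := by
      rw [div_le_iff₀ hw0]
      rw [div_le_iff₀ hLpos] at hw
      linarith
    rw [div_le_iff₀ (by positivity)]
    linarith
  set κ0 := L / (2 * M) with hκ0
  set w0 := 4 / L with hw0
  have hκ0p : 0 < κ0 := by positivity
  have hw0p : 0 < w0 := by positivity
  refine ⟨min κ0 (κ0 / (4 * w0 ^ 2)), by positivity, fun w => ?_⟩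
  have hm0 : 0 ≤ min 1 (w ^ 2) := by positivity
  by_cases hw : w0 ≤ |w|
  · refine le_trans ?_ (hbig w hw)
    calc _ ≤ κ0 * 1 := by
          gcongr
          · exact min_le_left _ _
          · exact min_le_left _ _
      _ = κ0 := mul_one _
  · push Not at hw
    by_cases hwz : w = 0
    · subst hwz; simp
    have hwp : 0 < |w| := abs_pos.2 hwz
    set n := ⌈w0 / |w|⌉₊ with hn
    have hn1 : w0 / |w| ≤ n := Nat.le_ceil _
    have hn2 : (n : ℝ) < w0 / |w| + 1 := Nat.ceil_lt_add_one (by positivity)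
    have h1 : 1 ≤ w0 / |w| := (one_le_div hwp).2 hw.le
    have hn3 : (n : ℝ) ≤ 2 * w0 / |w| := by rw [mul_div_assoc]; linarith
    have hnp : (0 : ℝ) < n := by linarith
    have hb := hbig (n * w) (by
      rw [abs_mul, Nat.abs_cast]; rwa [div_le_iff₀ hwp] at hn1)
    have hc : ∫ s in Icc a b, (1 - Real.cos (n * w * f s)) ≤
        n ^ 2 * ∫ s in Icc a b, (1 - Real.cos (w * f s)) := by
      rw [← integral_const_mul]
      refine integral_mono (hint _) ((hint w).const_mul _) ?_
      intro s
      have := aux_cos_nat n (w * f s)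
      simpa [mul_assoc] using this
    set H := ∫ s in Icc a b, (1 - Real.cos (w * f s))
    have hH : 0 ≤ H := by
      have : 0 ≤ (n : ℝ) ^ 2 * H := by linarith
      exact nonneg_of_mul_nonneg_right this (by positivity)
    have h4 : κ0 ≤ (2 * w0 / |w|) ^ 2 * H := by
      refine (hb.trans hc).trans ?_
      gcongr
    rw [div_pow, sq_abs, div_mul_eq_mul_div, le_div_iff₀ (by positivity)] at h4
    calc _ ≤ κ0 / (4 * w0 ^ 2) * w ^ 2 := by
          gcongr
          · exact min_le_right _ _
          · exact min_le_right _ _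
      _ ≤ H := by
        rw [div_mul_eq_mul_div, div_le_iff₀ (by positivity)]
        linarith

lemma aux_sfinite (μ : Measure ℝ) (hμ0 : μ {0} = 0)
    (hμint : Integrable (fun u : ℝ => min 1 (u ^ 2)) μ) : SFinite μ := by
  obtain ⟨t, ht, h0, hs⟩ := hμint.aefinStronglyMeasurable.exists_set_sigmaFinite
  have hz : μ tᶜ = 0 := by
    rw [Filter.EventuallyEq, ae_restrict_iff' ht.compl] at h0
    have hne : ∀ᵐ u ∂μ, u ≠ 0 := by
      rw [ae_iff]; simpa using hμ0
    rw [measure_eq_zero_iff_ae_notMem]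
    filter_upwards [h0, hne] with u h1 h2 h3
    have h4 := h1 h3
    have : 0 < min 1 (u ^ 2) := by positivity
    simp only [Pi.zero_apply] at h4
    linarith
  have : μ.restrict t = μ := Measure.restrict_eq_self_of_ae_mem (by
    filter_upwards [measure_eq_zero_iff_ae_notMem.1 hz] with u hu
    simpa using hu)
  rw [← this]; infer_instance

lemma aux_sq_int (μ : Measure ℝ) 
    (hμint : Integrable (fun u : ℝ => min 1 (u ^ 2)) μ)
    (hμexp : ∀ C : ℝ, Integrable (fun u : ℝ => Real.exp (C * u)) (μ.restrict {u : ℝ | 1 ≤ |u|})) :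
    Integrable (fun u : ℝ => u ^ 2) μ := by
  have hms : MeasurableSet {u : ℝ | 1 ≤ |u|} := measurableSet_le measurable_const (by fun_prop)
  have h1 := ((hμexp 1).add (hμexp (-1))).const_mul 2
  have h2 := (integrable_indicator_iff hms).2 h1
  refine (hμint.add h2).mono' (by fun_prop) (ae_of_all _ fun u => ?_)
  rw [Real.norm_eq_abs, abs_of_nonneg (sq_nonneg u)]
  by_cases hu : 1 ≤ |u|
  · simp only [Pi.add_apply, indicator, mem_setOf_eq, hu, if_true]
    have h0 : 0 ≤ min 1 (u ^ 2) := by positivity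
    have h3 := Real.quadratic_le_exp_of_nonneg (abs_nonneg u)
    rw [sq_abs] at h3
    have h4 : Real.exp |u| ≤ Real.exp (1 * u) + Real.exp (-1 * u) := by
      rcases abs_cases u with ⟨h, _⟩ | ⟨h, _⟩ <;> rw [h]
      · rw [one_mul]; linarith [Real.exp_pos (-1 * u)]
      · rw [neg_one_mul]; linarith [Real.exp_pos (1 * u)]
    linarith [abs_nonneg u]
  · simp only [Pi.add_apply, indicator, mem_setOf_eq, hu, if_false, add_zero]
    push Not at hu
    rw [min_eq_right]
    have := pow_le_one₀ (n := 2) (abs_nonneg u) hu.le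
    rwa [sq_abs] at this

/-- Lemma 3.4: under `μ((0,∞)) > 0` and the smoothness condition (F₂) on the
kernel `f`, condition (Ĥ₄) holds: there are `q, ϑ > 0` with
`Θ(z,[q,∞)) ≥ ϑ·min(ε²,1)` whenever `|z| ≥ ε`. -/
theorem smoothKernel_implies_H4hat
    (μ : Measure ℝ)
    (hμ0 : μ {0} = 0)
    (hμint : Integrable (fun u : ℝ => min 1 (u ^ 2)) μ)
    (hμpos : 0 < μ (Set.Ioi (0 : ℝ)))
    (hμexp : ∀ C : ℝ, Integrable (fun u : ℝ => Real.exp (C * u)) (μ.restrict {u : ℝ | 1 ≤ |u|}))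
    (I : Set ℝ) (hI : I.OrdConnected)
    (f : ℝ → ℝ) (hfmeas : Measurable f)
    (hfbdd : ∃ C : ℝ, ∀ s ∈ I, |f s| ≤ C)
    (hf2int : IntegrableOn (fun s => f s ^ 2) I)
    (hf2pos : 0 < ∫ s in I, f s ^ 2)
    (a b : ℝ) (hab : a < b) (habI : Set.Icc a b ⊆ I)
    (hfpos : ∀ s ∈ Set.Icc a b, 0 < f s)
    (hfC1 : ContDiffOn ℝ 1 f (Set.Icc a b))
    (hfderiv : ∀ s ∈ Set.Icc a b, derivWithin f (Set.Icc a b) s ≠ 0) :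
    ∃ q > (0 : ℝ), ∃ ϑ > (0 : ℝ), ∀ ε > (0 : ℝ), ∀ z : ℝ, ε ≤ |z| →
      ϑ * min (ε ^ 2) 1 ≤ kernelTheta μ I f z (Set.Ici q) := by
  obtain ⟨κ, hκ, hosc⟩ := aux_osc f a b hab hfC1 hfderiv
  have hsf : SFinite μ := aux_sfinite μ hμ0 hμint
  have hsq := aux_sq_int μ hμint hμexp
  -- a good level
  obtain ⟨c, hc, hcμ⟩ : ∃ c > (0 : ℝ), 0 < μ (Ici c) := by
    by_contra! hcon
    have : Ioi (0 : ℝ) ⊆ ⋃ n : ℕ, Ici (1 / ((n : ℝ) + 1)) := by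
      intro u hu
      obtain ⟨n, hn⟩ := exists_nat_one_div_lt (mem_Ioi.1 hu)
      exact mem_iUnion.2 ⟨n, hn.le⟩
    have h0 : μ (⋃ n : ℕ, Ici (1 / ((n : ℝ) + 1))) = 0 := by
      rw [measure_iUnion_null_iff]
      intro n
      exact le_antisymm (hcon _ (by positivity)) zero_le
    exact hμpos.ne' (measure_mono_null this h0)
  have hcfin : μ (Ici c) < ⊤ := by
    have h1 := hsq.measure_norm_ge_lt_top (ε := c ^ 2) (by positivity)
    refine lt_of_le_of_lt (measure_mono ?_) h1
    intro u hu
    simp only [mem_setOf_eq, Real.norm_eq_abs, abs_of_nonneg (sq_nonneg u)]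
    exact pow_le_pow_left₀ hc.le hu 2
  obtain ⟨s0, hs0, hmin⟩ := isCompact_Icc.exists_isMinOn (nonempty_Icc.2 hab.le) hfC1.continuousOn
  have hm : 0 < f s0 := hfpos s0 hs0
  have hν : IsFiniteMeasure (μ.restrict (Ici c)) := ⟨by simpa using hcfin⟩
  have hμr : 0 < μ.real (Ici c) := ENNReal.toReal_pos hcμ.ne' hcfin.ne
  refine ⟨f s0 * c, by positivity, κ * min 1 (c ^ 2) * μ.real (Ici c), by positivity, ?_⟩
  intro ε hε z hz
  set q := f s0 * c with hq
  set g : ℝ → ℝ → ℝ := fun s u =>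
    (Ici q).indicator (fun _ => (1 : ℝ)) (f s * u) * (1 - Real.cos (f s * z * u)) with hg
  have hg0 : ∀ s u, 0 ≤ g s u := by
    intro s u
    refine mul_nonneg (indicator_nonneg (fun _ _ => zero_le_one) _) ?_
    linarith [Real.cos_le_one (f s * z * u)]
  have hgle : ∀ s u, g s u ≤ (f s ^ 2 * z ^ 2 / 2) * u ^ 2 := by
    intro s u
    have h1 : (Ici q).indicator (fun _ => (1 : ℝ)) (f s * u) ≤ 1 :=
      indicator_le_self' (fun _ _ => zero_le_one) _
    have h2 : 0 ≤ 1 - Real.cos (f s * z * u) := by linarith [Real.cos_le_one (f s * z * u)]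
    have h3 := Real.one_sub_sq_div_two_le_cos (x := f s * z * u)
    have h4 := mul_le_mul_of_nonneg_right h1 h2
    have h5 : (f s * z * u) ^ 2 = f s ^ 2 * z ^ 2 * u ^ 2 := by ring
    simp only [hg]
    linarith
  have hgm : Measurable (Function.uncurry g) := by
    have h1 : Measurable ((Ici q).indicator (fun _ : ℝ => (1 : ℝ))) :=
      measurable_const.indicator measurableSet_Ici
    have h2 : Measurable (fun p : ℝ × ℝ => f p.1) := hfmeas.comp measurable_fst
    have h3 := h1.comp (h2.mul measurable_snd)
    refine h3.mul (measurable_const.sub (Real.measurable_cos.comp ?_))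
    exact (h2.mul measurable_const).mul measurable_snd
  have hgi : ∀ s, Integrable (g s) μ := by
    intro s
    refine (hsq.const_mul (f s ^ 2 * z ^ 2 / 2)).mono'
      (hgm.comp measurable_prodMk_left).aestronglyMeasurable (ae_of_all _ fun u => ?_)
    rw [Real.norm_eq_abs, abs_of_nonneg (hg0 s u)]
    exact hgle s u
  have hG0 : ∀ s, 0 ≤ ∫ u, g s u ∂μ := fun s => integral_nonneg (hg0 s)
  have hGi : IntegrableOn (fun s => ∫ u, g s u ∂μ) I := by
    have hGm : StronglyMeasurable (fun s => ∫ u, g s u ∂μ) :=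
      hgm.stronglyMeasurable.integral_prod_right
    refine (hf2int.mul_const (z ^ 2 / 2 * ∫ u, u ^ 2 ∂μ)).mono' hGm.aestronglyMeasurable
      (ae_of_all _ fun s => ?_)
    rw [Real.norm_eq_abs, abs_of_nonneg (hG0 s)]
    refine (integral_mono (hgi s) (hsq.const_mul _) (hgle s)).trans ?_
    rw [integral_const_mul]
    exact le_of_eq (by ring)
  -- Fubini on the good rectangle
  set h : ℝ → ℝ → ℝ := fun s u => 1 - Real.cos (z * u * f s) with hh
  have hhm : Measurable (Function.uncurry h) := by
    have h2 : Measurable (fun p : ℝ × ℝ => f p.1) := hfmeas.comp measurable_fst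
    exact measurable_const.sub (Real.measurable_cos.comp
      ((measurable_const.mul measurable_snd).mul h2))
  have hhi : Integrable (Function.uncurry h)
      ((volume.restrict (Icc a b)).prod (μ.restrict (Ici c))) := by
    refine Integrable.of_bound hhm.aestronglyMeasurable 2 (ae_of_all _ fun p => ?_)
    simp only [Function.uncurry, hh, Real.norm_eq_abs, abs_le]
    constructor <;> linarith [Real.cos_le_one (z * p.2 * f p.1), Real.neg_one_le_cos (z * p.2 * f p.1)]
  have step1 : ∫ s in Icc a b, ∫ u, g s u ∂μ ≤ ∫ s in I, ∫ u, g s u ∂μ :=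
    setIntegral_mono_set hGi (ae_of_all _ hG0) (HasSubset.Subset.eventuallyLE habI)
  have step2 : ∫ s in Icc a b, ∫ u in Ici c, h s u ∂μ ≤ ∫ s in Icc a b, ∫ u, g s u ∂μ := by
    refine setIntegral_mono_on hhi.integral_prod_left (hGi.mono_set habI) measurableSet_Icc ?_
    intro s hs
    have e : ∫ u in Ici c, h s u ∂μ = ∫ u in Ici c, g s u ∂μ := by
      refine setIntegral_congr_fun measurableSet_Ici ?_
      intro u hu
      have hfs : f s0 ≤ f s := hmin hs
      have : f s * u ∈ Ici q := mul_le_mul hfs hu hc.le (hm.le.trans hfs)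
      simp only [hg, hh, indicator_of_mem this, one_mul]
      congr 2; ring
    rw [e]
    exact setIntegral_le_integral (hgi s) (ae_of_all _ (hg0 s))
  have step3 : ∫ s in Icc a b, ∫ u in Ici c, h s u ∂μ = ∫ u in Ici c, ∫ s in Icc a b, h s u ∂volume ∂μ :=
    integral_integral_swap hhi
  have step4 : κ * min 1 (c ^ 2) * μ.real (Ici c) * min (ε ^ 2) 1 ≤
      ∫ u in Ici c, ∫ s in Icc a b, h s u ∂volume ∂μ := by
    have e : κ * min 1 (c ^ 2) * μ.real (Ici c) * min (ε ^ 2) 1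
        = ∫ u in Ici c, κ * (min 1 (c ^ 2) * min (ε ^ 2) 1) ∂μ := by
      rw [setIntegral_const, smul_eq_mul]; ring
    rw [e]
    refine setIntegral_mono_on (integrable_const _) hhi.integral_prod_right measurableSet_Ici ?_
    intro u hu
    refine le_trans ?_ (hosc (z * u))
    have hu' : c ≤ u := hu
    refine mul_le_mul_of_nonneg_left (le_min ?_ ?_) hκ.le
    · exact mul_le_one₀ (min_le_left _ _) (by positivity) (min_le_right _ _)
    · have h1 : ε ^ 2 ≤ z ^ 2 := by
        rw [← sq_abs z]; exact pow_le_pow_left₀ hε.le hz 2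
      have h2 : c ^ 2 ≤ u ^ 2 := pow_le_pow_left₀ hc.le hu' 2
      calc _ ≤ c ^ 2 * ε ^ 2 := by
            gcongr
            · exact min_le_right _ _
            · exact min_le_left _ _
        _ ≤ u ^ 2 * z ^ 2 := by gcongr
        _ = _ := by ring
  change _ ≤ ∫ s in I, ∫ u, g s u ∂μ
  linarith
end

section
/- Let μ be a Borel measure on ℝ with μ({0}) = 0 and ∫_ℝ min(1,u²) μ(du) < ∞, satisfying μ((0,∞)) = +∞ and ∫_{|u|≥1} e^{Cu} μ(du) < ∞ for every C ∈ ℝ. Assume conditions (T1) and (T2). Fix λ > 0 and define, for z ∈ ℂ, Ψ(z) = ∫_{−∞}^0 ∫_ℝ (e^{−iz e^{λs} u} − 1 + iz e^{λs} u) μ(du) ds, and for k ≥ 0 and ζ ∈ ℝ, 𝓜_k(ζ) = ∫_{−∞}^0 e^{kλs} M_k(e^{λs} ζ) ds. For x ≥ 0 let ζ(x) be the unique ζ ≥ 0 with 𝓜₁(ζ) = x. Then the function p(x) := (1/2π) ∫_ℝ e^{ixz + Ψ(z)} dz is well defined (the integrand is absolutely integrable together with z^k e^{ixz+Ψ(z)}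 for every k ≥ 0), p is infinitely differentiable with all derivatives bounded, and p(x) · √(2π 𝓜₂(ζ(x))) · exp(x·ζ(x) − 𝓜₀(ζ(x))) → 1 as x → +∞. -/
open MeasureTheory Filter Set

/-- The exponential moment functions `M_k` of a Lévy measure `μ`. -/
noncomputable def levyM (μ : Measure ℝ) : ℕ → ℝ → ℝ
  | 0, ξ => ∫ u, (Real.exp (ξ * u) - 1 - ξ * u) ∂μ
  | 1, ξ => ∫ u, u * (Real.exp (ξ * u) - 1) ∂μ
  | (n + 2), ξ => ∫ u, u ^ (n + 2) * Real.exp (ξ * u) ∂μ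

/-- `𝓜_k(ζ) = ∫_I f(s)^k M_k(f(s)ζ) ds`. -/
noncomputable def kernelM (μ : Measure ℝ) (I : Set ℝ) (f : ℝ → ℝ) (k : ℕ) (ξ : ℝ) : ℝ :=
  ∫ s in I, (f s) ^ k * levyM μ k (f s * ξ)

/-- `Ψ(z) = ∫_I ∫_ℝ (e^{−izf(s)u} − 1 + izf(s)u) μ(du) ds`. -/
noncomputable def kernelPsi (μ : Measure ℝ) (I : Set ℝ) (f : ℝ → ℝ) (z : ℂ) : ℂ :=
  ∫ s in I, ∫ u, (Complex.exp (-(Complex.I * z * ((f s * u : ℝ) : ℂ))) - 1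
    + Complex.I * z * ((f s * u : ℝ) : ℂ)) ∂μ


namespace OUaux

open Complex

/-- All exponential moments. -/
def HM (ν : Measure ℝ) : Prop := ∀ C : ℝ, Integrable (fun v : ℝ => v ^ 2 * Real.exp (C * |v|)) ν

theorem HM.int {ν : Measure ℝ} (h : HM ν) {E : Type*} [NormedAddCommGroup E] {f : ℝ → E} (hf : AEStronglyMeasurable f ν)
    (A C : ℝ) (hb : ∀ v, ‖f v‖ ≤ A * (v ^ 2 * Real.exp (C * |v|))) : Integrable f ν :=
  ((h C).const_mul A).mono' hf (Eventually.of_forall hb)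

theorem HM.intc {ν : Measure ℝ} (h : HM ν) {E : Type*} [NormedAddCommGroup E] [SecondCountableTopology E] {f : ℝ → E}
    (hf : Continuous f)
    (A C : ℝ) (hb : ∀ v, ‖f v‖ ≤ A * (v ^ 2 * Real.exp (C * |v|))) : Integrable f ν :=
  h.int hf.aestronglyMeasurable A C hb

theorem ex1 (w : ℂ) : ‖cexp w - 1‖ ≤ ‖w‖ * Real.exp ‖w‖ := by
  have := Complex.norm_exp_sub_sum_le_norm_mul_exp w 1
  simpa using this

theorem ex2 (w : ℂ) : ‖cexp w - 1 - w‖ ≤ ‖w‖ ^ 2 * Real.exp ‖w‖ := by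
  have := Complex.norm_exp_sub_sum_le_norm_mul_exp w 2
  simpa [Finset.sum_range_succ, sub_add_eq_sub_sub] using this

theorem ex3 (w : ℂ) : ‖cexp w - 1 - w - w ^ 2 / 2‖ ≤ ‖w‖ ^ 3 * Real.exp ‖w‖ := by
  have := Complex.norm_exp_sub_sum_le_norm_mul_exp w 3
  simpa [Finset.sum_range_succ, sub_add_eq_sub_sub] using this

theorem rex1 (w : ℝ) : |Real.exp w - 1| ≤ |w| * Real.exp |w| := by
  have := ex1 w
  rw [← Complex.ofReal_exp, ← Complex.ofReal_one, ← Complex.ofReal_sub, Complex.norm_real,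
    Complex.norm_real] at this
  simpa using this

theorem rex2 (w : ℝ) : |Real.exp w - 1 - w| ≤ |w| ^ 2 * Real.exp |w| := by
  have := ex2 w
  rw [← Complex.ofReal_exp, ← Complex.ofReal_one, ← Complex.ofReal_sub, ← Complex.ofReal_sub, Complex.norm_real,
    Complex.norm_real] at this
  simpa using this

theorem one_sub_cos_lower (w : ℝ) : w ^ 2 / 2 - w ^ 4 / 2 ≤ 1 - Real.cos w := by
  by_cases h : |w| ≤ 1
  · have := Real.cos_bound h
    have h4 : |w| ^ 4 = w ^ 4 := by
      rw [show (4:ℕ) = 2 * 2 from rfl, pow_mul, sq_abs, ← pow_mul]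
    rw [h4, abs_le] at this
    nlinarith [this.2, pow_nonneg (sq_nonneg w) 2]
  · have h1 : 1 ≤ w ^ 2 := by
      rw [← sq_abs]; nlinarith [not_le.1 h]
    nlinarith [Real.cos_le_one w]

theorem one_sub_cos_upper (w : ℝ) : 1 - Real.cos w ≤ w ^ 2 / 2 := by
  linarith [Real.one_sub_sq_div_two_le_cos (x := w)]

/-- quantitative third order bound on the unit circle -/
theorem unit3 (w η : ℝ) (hη : 0 < η) :
    ‖cexp (-(I * w)) - 1 + I * w + (w : ℂ) ^ 2 / 2‖ ≤ 2 * (η * w ^ 2 + w ^ 4 / η) := by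
  have h3 : ‖cexp (-(I * w)) - 1 + I * w + (w : ℂ) ^ 2 / 2‖ ≤ 4 * |w| ^ 3 := by
    by_cases h : |w| ≤ 1
    · have := ex3 (-(I * w))
      have e : cexp (-(I * w)) - 1 - (-(I * w)) - (-(I * w)) ^ 2 / 2
          = cexp (-(I * w)) - 1 + I * w + (w : ℂ) ^ 2 / 2 := by
        have : (-(I * (w:ℂ))) ^ 2 = - (w:ℂ) ^ 2 := by
          rw [neg_sq, mul_pow, I_sq]; ring
        rw [this]; ring
      rw [e] at this
      refine this.trans ?_
      have n : ‖-(I * (w:ℂ))‖ = |w| := by simp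
      rw [n, mul_comm]
      have : Real.exp |w| ≤ 4 := by
        have := Real.exp_one_lt_d9
        have := Real.exp_le_exp.2 h
        linarith
      gcongr
    · push Not at h
      have n1 : ‖cexp (-(I * w))‖ = 1 := by
        rw [Complex.norm_exp]; simp
      have : ‖cexp (-(I * w)) - 1 + I * w + (w : ℂ) ^ 2 / 2‖ ≤ 1 + 1 + |w| + |w| ^ 2 / 2 := by
        refine (norm_add_le _ _).trans (add_le_add ((norm_add_le _ _).trans (add_le_add ((norm_sub_le _ _).trans (by rw [n1]; simp)) (by simp))) (by simp))
      refine this.trans ?_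
      have a : |w| ≤ |w| ^ 3 := by nlinarith [sq_nonneg (|w|), mul_pos (by linarith : 0 < |w|) (by linarith : 0 < |w| - 1)]
      have b : |w| ^ 2 ≤ |w| ^ 3 := by nlinarith [sq_nonneg (|w|)]
      nlinarith
  refine h3.trans ?_
  have e4 : w ^ 4 = |w| ^ 4 := by
    rw [show (4:ℕ) = 2 * 2 from rfl, pow_mul, pow_mul, sq_abs]
  have e2 : w ^ 2 = |w| ^ 2 := (sq_abs w).symm
  rw [e4, e2]
  have : η * |w| ^ 2 + |w| ^ 4 / η - 2 * |w| ^ 3 = |w| ^ 2 * (η - |w|) ^ 2 / η := by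
    field_simp; ring
  have : 0 ≤ |w| ^ 2 * (η - |w|) ^ 2 / η := by positivity
  linarith

noncomputable def Psi (ν : Measure ℝ) (z : ℂ) : ℂ :=
  ∫ v : ℝ, (cexp (-(I * z * (v : ℂ))) - 1 + I * z * (v : ℂ)) ∂ν
noncomputable def Phi (ν : Measure ℝ) (ζ y : ℝ) : ℂ :=
  ∫ v : ℝ, ((Real.exp (ζ * v) : ℝ) : ℂ) * (cexp (-(I * ((y * v : ℝ) : ℂ))) - 1 + I * ((y * v : ℝ) : ℂ)) ∂ν
noncomputable def Tht (ν : Measure ℝ) (ζ y : ℝ) : ℝ :=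
  ∫ v : ℝ, Real.exp (ζ * v) * (1 - Real.cos (y * v)) ∂ν
noncomputable def KM (ν : Measure ℝ) (k : ℕ) (ζ : ℝ) : ℝ := ∫ v : ℝ, v ^ k * Real.exp (ζ * v) ∂ν
noncomputable def K0 (ν : Measure ℝ) (ζ : ℝ) : ℝ := ∫ v : ℝ, (Real.exp (ζ * v) - 1 - ζ * v) ∂ν
noncomputable def K1 (ν : Measure ℝ) (ζ : ℝ) : ℝ := ∫ v : ℝ, v * (Real.exp (ζ * v) - 1) ∂ν

theorem exp_abs (ζ v : ℝ) : Real.exp (ζ * v) ≤ Real.exp (|ζ| * |v|) := by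
  rw [← abs_mul]; exact Real.exp_le_exp.2 (le_abs_self _)

variable {ν : Measure ℝ}

theorem HM.psi (h : HM ν) (z : ℂ) :
    Integrable (fun v : ℝ => cexp (-(I * z * (v : ℂ))) - 1 + I * z * (v : ℂ)) ν := by
  refine h.intc (by fun_prop) (‖z‖ ^ 2) ‖z‖ fun v => ?_
  have := ex2 (-(I * z * (v : ℂ)))
  rw [sub_neg_eq_add] at this
  refine this.trans (le_of_eq ?_)
  simp [mul_pow]; ring

theorem HM.phi (h : HM ν) (ζ y : ℝ) :
    Integrable (fun v : ℝ => ((Real.exp (ζ * v) : ℝ) : ℂ) * (cexp (-(I * ((y * v : ℝ) : ℂ))) - 1 + I * ((y * v : ℝ) : ℂ))) ν := by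
  refine h.intc (by fun_prop) (y ^ 2) (|ζ| + |y|) fun v => ?_
  have := ex2 (-(I * ((y * v : ℝ) : ℂ)))
  rw [sub_neg_eq_add] at this
  rw [norm_mul, Complex.norm_real, Real.norm_eq_abs, Real.abs_exp]
  refine (mul_le_mul (exp_abs ζ v) this (norm_nonneg _) (Real.exp_pos _).le).trans (le_of_eq ?_)
  have n : ‖-(I * ((y * v : ℝ) : ℂ))‖ = |y| * |v| := by simp
  rw [n, mul_pow, sq_abs, sq_abs, add_mul, Real.exp_add]; ring

theorem HM.tht (h : HM ν) (ζ y : ℝ) :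
    Integrable (fun v : ℝ => Real.exp (ζ * v) * (1 - Real.cos (y * v))) ν := by
  refine h.intc (by fun_prop) (y ^ 2) |ζ| fun v => ?_
  have := one_sub_cos_upper (y * v)
  have h2 := Real.cos_le_one (y * v)
  rw [Real.norm_eq_abs, abs_mul, Real.abs_exp, abs_of_nonneg (by linarith)]
  calc _ ≤ Real.exp (|ζ| * |v|) * ((y * v) ^ 2) := by
        refine mul_le_mul (exp_abs ζ v) (by nlinarith) (by linarith) (Real.exp_pos _).le
    _ = _ := by ring

theorem HM.km (h : HM ν) (k : ℕ) (ζ : ℝ) :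
    Integrable (fun v : ℝ => v ^ (k + 2) * Real.exp (ζ * v)) ν := by
  refine h.intc (by fun_prop) (k.factorial) (|ζ| + 1) fun v => ?_
  rw [Real.norm_eq_abs, abs_mul, Real.abs_exp, abs_pow, pow_add, sq_abs, add_mul, Real.exp_add, one_mul]
  have h1 : |v| ^ k ≤ k.factorial * Real.exp |v| := by
    have := Real.pow_div_factorial_le_exp |v| (abs_nonneg _) k
    rw [div_le_iff₀ (by positivity)] at this
    linarith
  have := exp_abs ζ v
  calc _ ≤ (k.factorial * Real.exp |v|) * v ^ 2 * Real.exp (|ζ| * |v|) := by gcongr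
    _ = _ := by ring

theorem HM.k0 (h : HM ν) (ζ : ℝ) : Integrable (fun v : ℝ => Real.exp (ζ * v) - 1 - ζ * v) ν := by
  refine h.intc (by fun_prop) (ζ ^ 2) (|ζ|) fun v => ?_
  refine (rex2 _).trans (le_of_eq ?_)
  rw [abs_mul, mul_pow, sq_abs, sq_abs]; ring

theorem HM.k1 (h : HM ν) (ζ : ℝ) : Integrable (fun v : ℝ => v * (Real.exp (ζ * v) - 1)) ν := by
  refine h.intc (by fun_prop) (|ζ|) (|ζ|) fun v => ?_
  rw [Real.norm_eq_abs, abs_mul]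
  refine (mul_le_mul_of_nonneg_left (rex1 _) (abs_nonneg _)).trans (le_of_eq ?_)
  rw [abs_mul, ← sq_abs v]; ring

theorem Psi_eq (h : HM ν) (ζ y : ℝ) :
    Psi ν (y + ζ * I) = K0 ν ζ + Phi ν ζ y - I * y * K1 ν ζ := by
  unfold Psi K0 Phi K1
  have h0 : Integrable (fun v : ℝ => ((Real.exp (ζ * v) - 1 - ζ * v : ℝ) : ℂ)) ν := (h.k0 ζ).ofReal
  have h1 : Integrable (fun v : ℝ => ((v * (Real.exp (ζ * v) - 1) : ℝ) : ℂ)) ν := (h.k1 ζ).ofReal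
  rw [← integral_complex_ofReal, ← integral_complex_ofReal, ← integral_const_mul, ← integral_add h0 (h.phi ζ y)]
  have h2 := integral_sub (h0.add (h.phi ζ y)) (h1.const_mul (I * y))
  simp only [Pi.add_apply] at h2
  rw [← h2]
  congr 1; ext v
  have e : cexp (-(I * (y + ζ * I) * v)) = cexp (ζ * v) * cexp (-(I * (y * v))) := by
    rw [← Complex.exp_add]; congr 1
    linear_combination (-(ζ * v : ℂ)) * I_sq
  push_cast
  rw [e]
  linear_combination ((ζ * v : ℂ)) * I_sq

theorem re_Phi (h : HM ν) (ζ y : ℝ) : (Phi ν ζ y).re = - Tht ν ζ y := by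
  unfold Phi Tht
  rw [← integral_neg]
  have := integral_re (h.phi ζ y)
  simp only [RCLike.re_eq_complex_re] at this
  rw [← this]
  congr 1; ext v
  rw [Complex.re_ofReal_mul]
  have : (cexp (-(I * ((y * v : ℝ) : ℂ)))).re = Real.cos (y * v) := by
    rw [Complex.exp_re]; simp [-Complex.ofReal_mul]
  simp only [add_re, sub_re, this]
  simp
  ring

theorem Psi_diff (h : HM ν) : Differentiable ℂ (Psi ν) := by
  intro z
  have := hasDerivAt_integral_of_dominated_loc_of_deriv_le (μ := ν) (𝕜 := ℂ)
    (F := fun (z : ℂ) (v : ℝ) => cexp (-(I * z * (v : ℂ))) - 1 + I * z * (v : ℂ))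
    (F' := fun (z : ℂ) (v : ℝ) => -(I * v) * (cexp (-(I * z * (v : ℂ))) - 1)) (x₀ := z)
    (s := Metric.ball z 1) (bound := fun v => (‖z‖ + 1) * (v ^ 2 * Real.exp ((‖z‖ + 1) * |v|)))
    (Metric.ball_mem_nhds _ one_pos)
    (Eventually.of_forall fun z => (h.psi z).aestronglyMeasurable)
    (h.psi z) (by apply Continuous.aestronglyMeasurable; fun_prop)
    (Eventually.of_forall ?_) ((h _).const_mul _) (Eventually.of_forall ?_)
  · exact this.2.differentiableAt
  · intro v w hw
    have hw' : ‖w‖ ≤ ‖z‖ + 1 := by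
      have : ‖w - z‖ < 1 := by simpa [dist_eq_norm] using hw
      have := norm_le_norm_add_norm_sub' w z
      linarith
    rw [norm_mul]
    have n : ‖-(I * w * (v : ℂ))‖ = ‖w‖ * |v| := by simp
    have n' : ‖-(I * (v : ℂ))‖ = |v| := by simp
    have := ex1 (-(I * w * (v : ℂ)))
    rw [n] at this
    rw [n']
    calc _ ≤ |v| * (‖w‖ * |v| * Real.exp (‖w‖ * |v|)) := by gcongr
      _ ≤ |v| * ((‖z‖ + 1) * |v| * Real.exp ((‖z‖ + 1) * |v|)) := by gcongr
      _ = _ := by rw [← sq_abs v]; ring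
  · intro v w hw
    have h1 : HasDerivAt (fun w : ℂ => I * w * (v : ℂ)) (I * v) w := by
      simpa using ((hasDerivAt_id w).const_mul I).mul_const (v : ℂ)
    have := ((h1.neg.cexp).sub_const 1).add h1
    exact this.congr_deriv (by simp; ring)

theorem Psi_cont (h : HM ν) : Continuous (Psi ν) := (Psi_diff h).continuous

theorem Phi_cont (h : HM ν) (ζ : ℝ) : Continuous (Phi ν ζ) := by
  have : Phi ν ζ = fun y : ℝ => Psi ν (y + ζ * I) - K0 ν ζ + I * y * K1 ν ζ := by
    ext y; rw [Psi_eq h]; ring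
  rw [this]
  have := Psi_cont h
  fun_prop

/-- uniform superpolynomial decay -/
def HD (ν : Measure ℝ) : Prop := ∀ N : ℕ, ∃ K : ℝ, 0 < K ∧ ∀ ζ : ℝ, 0 ≤ ζ → ∀ y : ℝ,
  Real.exp (- Tht ν ζ y) ≤ K * ((1 + y ^ 2) ^ N)⁻¹

theorem Tht_nonneg (ζ y : ℝ) : 0 ≤ Tht ν ζ y :=
  integral_nonneg fun v => mul_nonneg (Real.exp_pos _).le (by linarith [Real.cos_le_one (y * v)])

theorem normF (h : HM ν) (x η y : ℝ) :
    ‖cexp (I * x * (y + η * I) + Psi ν (y + η * I))‖ = Real.exp (- (x * η) + K0 ν η - Tht ν η y) := by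
  rw [Complex.norm_exp, Psi_eq h]
  congr 1
  simp [re_Phi h]
  ring

theorem normF0 (h : HM ν) (x y : ℝ) :
    ‖cexp (I * x * y + Psi ν y)‖ = Real.exp (- Tht ν 0 y) := by
  have := normF h x 0 y
  have k : K0 ν 0 = 0 := by simp [K0]
  simpa [k] using this

theorem int_k (h : HM ν) (hd : HD ν) (k : ℕ) (x : ℝ) :
    Integrable (fun z : ℝ => (z : ℂ) ^ k * cexp (I * x * z + Psi ν z)) := by
  obtain ⟨K, hK, hb⟩ := hd (k + 1)
  refine (integrable_inv_one_add_sq.const_mul K).mono' ?_ (Eventually.of_forall fun z => ?_)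
  · have := Psi_cont h
    apply Continuous.aestronglyMeasurable
    fun_prop
  · rw [norm_mul, normF0 h, norm_pow, Complex.norm_real, Real.norm_eq_abs]
    have h1 : |z| ^ k ≤ (1 + z ^ 2) ^ k := by
      refine pow_le_pow_left₀ (abs_nonneg _) ?_ k
      rw [← sq_abs]; nlinarith [sq_nonneg (|z| - 1), abs_nonneg z]
    have := hb 0 le_rfl z
    have hp : 0 < 1 + z ^ 2 := by positivity
    calc _ ≤ (1 + z ^ 2) ^ k * (K * ((1 + z ^ 2) ^ (k + 1))⁻¹) := by gcongr
      _ = _ := by field_simp; ring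

/-- smoothness of the inverse transform -/
theorem smooth (h : HM ν) (hd : HD ν) (p : ℝ → ℝ)
    (hp : ∀ x : ℝ, p x = (1 / (2 * Real.pi)) * (∫ z : ℝ, cexp (I * x * z + Psi ν z)).re) :
    ContDiff ℝ (⊤ : ℕ∞) p ∧ (∀ n : ℕ, ∃ C : ℝ, ∀ x : ℝ, |iteratedDeriv n p x| ≤ C) := by
  let P : ℕ → ℝ → ℂ := fun k x => ∫ z : ℝ, (I * z) ^ k * cexp (I * x * z + Psi ν z)
  have hcont := Psi_cont h
  have hint : ∀ k (x : ℝ), Integrable (fun z : ℝ => (I * z) ^ k * cexp (I * x * z + Psi ν z)) := by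
    intro k x
    have := (int_k h hd k x).const_mul (I ^ k)
    refine this.congr (Eventually.of_forall fun z => ?_)
    simp only; rw [mul_pow]; ring
  have hnorm : ∀ k (x z : ℝ), ‖(I * z) ^ k * cexp (I * x * z + Psi ν z)‖ = |z| ^ k * Real.exp (- Tht ν 0 z) := by
    intro k x z
    rw [norm_mul, normF0 h]; simp
  have hder : ∀ k x, HasDerivAt (P k) (P (k + 1) x) x := by
    intro k x
    refine (hasDerivAt_integral_of_dominated_loc_of_deriv_le (μ := volume) (𝕜 := ℝ)
      (F := fun (x z : ℝ) => (I * z) ^ k * cexp (I * x * z + Psi ν z))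
      (F' := fun (x z : ℝ) => (I * z) ^ (k + 1) * cexp (I * x * z + Psi ν z)) (x₀ := x)
      (s := univ) (bound := fun z : ℝ => ‖(I * z) ^ (k + 1) * cexp (I * (x:ℂ) * z + Psi ν z)‖)
      univ_mem (Eventually.of_forall fun x => (hint k x).aestronglyMeasurable) (hint k x)
      (hint (k+1) x).aestronglyMeasurable (Eventually.of_forall fun z y _ => ?_) (hint (k+1) x).norm
      (Eventually.of_forall fun z y _ => ?_)).2
    · rw [hnorm, hnorm]
    · have h1 : HasDerivAt (fun y : ℝ => I * (y : ℂ) * z + Psi ν z) (I * z) y := by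
        have := ((((hasDerivAt_id y).ofReal_comp).const_mul I).mul_const (z : ℂ)).add_const (Psi ν z)
        simpa using this
      exact (h1.cexp.const_mul ((I * (z:ℂ)) ^ k)).congr_deriv (by ring)
  have hderR : ∀ k x, HasDerivAt (fun x => (1 / (2 * Real.pi)) * (P k x).re) ((1 / (2 * Real.pi)) * (P (k + 1) x).re) x := by
    intro k x
    have := (Complex.reCLM.hasFDerivAt.comp_hasDerivAt x (hder k x))
    exact HasDerivAt.const_mul _ this
  have hit : ∀ n, iteratedDeriv n p = fun x => (1 / (2 * Real.pi)) * (P n x).re := by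
    intro n
    induction n with
    | zero =>
      ext x; rw [iteratedDeriv_zero, hp]; simp [P]
    | succ n ih =>
      ext x
      rw [iteratedDeriv_succ, ih]
      exact (hderR n x).deriv
  constructor
  · refine contDiff_of_differentiable_iteratedDeriv fun m _ => ?_
    rw [hit]
    exact fun x => (hderR m x).differentiableAt
  · intro n
    refine ⟨(1 / (2 * Real.pi)) * ∫ z : ℝ, |z| ^ n * Real.exp (- Tht ν 0 z), fun x => ?_⟩
    rw [hit]
    simp only
    rw [abs_mul, abs_of_pos (by positivity : 0 < 1 / (2 * Real.pi))]
    gcongr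
    refine (Complex.abs_re_le_norm _).trans ((norm_integral_le_integral_norm _).trans (le_of_eq ?_))
    congr 1; ext z; exact hnorm n x z

theorem K0_bound (h : HM ν) (ζ η : ℝ) (h0 : 0 ≤ η) (h1 : η ≤ ζ) :
    K0 ν η ≤ ∫ v, ζ ^ 2 * (v ^ 2 * Real.exp (ζ * |v|)) ∂ν := by
  refine integral_mono (h.k0 η) ((h _).const_mul _) fun v => ?_
  refine (le_abs_self _).trans ((rex2 _).trans ?_)
  rw [abs_mul, mul_pow, sq_abs, sq_abs, abs_of_nonneg h0, mul_assoc]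
  gcongr

theorem shift (h : HM ν) (hd : HD ν) (x ζ : ℝ) (hζ : 0 ≤ ζ) :
    ∫ y : ℝ, cexp (I * x * y + Psi ν y) = ∫ y : ℝ, cexp (I * x * (y + ζ * I) + Psi ν (y + ζ * I)) := by
  obtain ⟨K, hK, hb⟩ := hd 1
  let F : ℂ → ℂ := fun z => cexp (I * x * z + Psi ν z)
  have hdiff : Differentiable ℂ F := by
    have := Psi_diff h
    fun_prop
  set B := Real.exp (|x| * ζ + ∫ v, ζ ^ 2 * (v ^ 2 * Real.exp (ζ * |v|)) ∂ν) * K with hB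
  have hB0 : 0 ≤ B := by positivity
  have bd : ∀ η, 0 ≤ η → η ≤ ζ → ∀ y : ℝ, ‖F (y + η * I)‖ ≤ B * (1 + y ^ 2)⁻¹ := by
    intro η h0 h1 y
    simp only [F]
    rw [normF h]
    have := hb η h0 y
    rw [pow_one] at this
    rw [sub_eq_add_neg, Real.exp_add, hB, mul_assoc]
    have k := K0_bound h ζ η h0 h1
    have : -(x * η) ≤ |x| * ζ := by
      have : -x ≤ |x| := neg_le_abs x
      calc -(x * η) = (-x) * η := by ring
        _ ≤ |x| * η := by gcongr
        _ ≤ _ := by gcongr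
    gcongr
  have hI : ∀ η, 0 ≤ η → η ≤ ζ → Integrable (fun y : ℝ => F (y + η * I)) := by
    intro η h0 h1
    refine (integrable_inv_one_add_sq.const_mul B).mono' ?_ (Eventually.of_forall (bd η h0 h1))
    have := hdiff.continuous
    apply Continuous.aestronglyMeasurable
    fun_prop
  have t0 := intervalIntegral_tendsto_integral (hI 0 le_rfl hζ) tendsto_neg_atTop_atBot tendsto_id
  have t1 := intervalIntegral_tendsto_integral (hI ζ hζ le_rfl) tendsto_neg_atTop_atBot tendsto_id
  have inv0 : Tendsto (fun T : ℝ => B * (1 + T ^ 2)⁻¹ * |ζ - 0|) atTop (nhds 0) := by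
    have : Tendsto (fun T : ℝ => (1 + T ^ 2)) atTop atTop :=
      tendsto_atTop_add_const_left _ _ (tendsto_pow_atTop two_ne_zero)
    simpa using (this.inv_tendsto_atTop.const_mul B).mul_const |ζ - 0|
  have vert : ∀ y : ℝ, ‖∫ η in (0:ℝ)..ζ, F (y + η * I)‖ ≤ B * (1 + y ^ 2)⁻¹ * |ζ - 0| := by
    intro y
    refine intervalIntegral.norm_integral_le_of_norm_le_const fun η hη => ?_
    rw [uIoc_of_le hζ] at hη
    exact bd η hη.1.le hη.2 y
  have v1 : Tendsto (fun T : ℝ => ∫ η in (0:ℝ)..ζ, F (T + η * I)) atTop (nhds 0) :=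
    squeeze_zero_norm (fun T => vert T) inv0
  have v2 : Tendsto (fun T : ℝ => ∫ η in (0:ℝ)..ζ, F ((-T : ℝ) + η * I)) atTop (nhds 0) :=
    squeeze_zero_norm (fun T => by simpa using vert (-T)) inv0
  have key : ∀ T : ℝ, (∫ y in (-T)..T, F (y + (0:ℝ) * I)) - (∫ y in (-T)..T, F (y + ζ * I))
      + I • (∫ η in (0:ℝ)..ζ, F (T + η * I)) - I • (∫ η in (0:ℝ)..ζ, F ((-T : ℝ) + η * I)) = 0 := by
    intro T
    have := integral_boundary_rect_eq_zero_of_differentiableOn F (-T : ℝ) (T + ζ * I) hdiff.differentiableOn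
    simpa using this
  have lim := (((t0.sub t1).add (v1.const_smul I)).sub (v2.const_smul I))
  have : Tendsto (fun _ : ℝ => (0 : ℂ)) atTop (nhds ((∫ y : ℝ, F (y + (0:ℝ) * I)) - (∫ y : ℝ, F (y + ζ * I)) + I • (0:ℂ) - I • (0:ℂ))) :=
    lim.congr key
  have e := tendsto_nhds_unique this tendsto_const_nhds
  simp only [smul_zero, add_zero, sub_zero] at e
  have e' := sub_eq_zero.1 e
  simpa [F] using e'

theorem Phi_approx (h : HM ν) (ζ y η : ℝ) (hη : 0 < η) :
    ‖Phi ν ζ y + ((y ^ 2 * KM ν 2 ζ / 2 : ℝ) : ℂ)‖ ≤ 2 * (η * y ^ 2 * KM ν 2 ζ + y ^ 4 * KM ν 4 ζ / η) := by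
  have i2 := h.km 0 ζ
  have i4 := h.km 2 ζ
  norm_num at i2 i4
  have e1 : ((y ^ 2 * KM ν 2 ζ / 2 : ℝ) : ℂ) = ∫ v : ℝ, ((y ^ 2 / 2 * (v ^ 2 * Real.exp (ζ * v)) : ℝ) : ℂ) ∂ν := by
    rw [integral_complex_ofReal, integral_const_mul]
    unfold KM; congr 1; ring
  have i2' : Integrable (fun v : ℝ => ((y ^ 2 / 2 * (v ^ 2 * Real.exp (ζ * v)) : ℝ) : ℂ)) ν := (i2.const_mul _).ofReal
  have e2 : 2 * (η * y ^ 2 * KM ν 2 ζ + y ^ 4 * KM ν 4 ζ / η)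
      = ∫ v : ℝ, (2 * η * y ^ 2 * (v ^ 2 * Real.exp (ζ * v)) + 2 * y ^ 4 / η * (v ^ 4 * Real.exp (ζ * v))) ∂ν := by
    rw [integral_add (i2.const_mul _) (i4.const_mul _), integral_const_mul, integral_const_mul]
    unfold KM; ring
  rw [e1, e2]
  unfold Phi
  rw [← integral_add (h.phi ζ y) i2']
  refine norm_integral_le_of_norm_le ((i2.const_mul _).add (i4.const_mul _)) (Eventually.of_forall fun v => ?_)
  have e3 : ((Real.exp (ζ * v) : ℝ) : ℂ) * (cexp (-(I * ((y * v : ℝ) : ℂ))) - 1 + I * ((y * v : ℝ) : ℂ))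
      + ((y ^ 2 / 2 * (v ^ 2 * Real.exp (ζ * v)) : ℝ) : ℂ)
      = ((Real.exp (ζ * v) : ℝ) : ℂ) * (cexp (-(I * ((y * v : ℝ) : ℂ))) - 1 + I * ((y * v : ℝ) : ℂ) + ((y * v : ℝ) : ℂ) ^ 2 / 2) := by
    push_cast; ring
  rw [e3, norm_mul, Complex.norm_real, Real.norm_eq_abs, Real.abs_exp]
  refine (mul_le_mul_of_nonneg_left (unit3 (y * v) η hη) (Real.exp_pos _).le).trans (le_of_eq ?_)
  ring

theorem Tht_lower (h : HM ν) (ζ y : ℝ) : y ^ 2 * KM ν 2 ζ / 2 - y ^ 4 * KM ν 4 ζ / 2 ≤ Tht ν ζ y := by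
  have i2 := h.km 0 ζ
  have i4 := h.km 2 ζ
  norm_num at i2 i4
  have e2 : y ^ 2 * KM ν 2 ζ / 2 - y ^ 4 * KM ν 4 ζ / 2
      = ∫ v : ℝ, (y ^ 2 / 2 * (v ^ 2 * Real.exp (ζ * v)) - y ^ 4 / 2 * (v ^ 4 * Real.exp (ζ * v))) ∂ν := by
    rw [integral_sub (i2.const_mul _) (i4.const_mul _), integral_const_mul, integral_const_mul]
    unfold KM; ring
  rw [e2]
  refine integral_mono ((i2.const_mul _).sub (i4.const_mul _)) (h.tht ζ y) fun v => ?_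
  have := mul_le_mul_of_nonneg_left (one_sub_cos_lower (y * v)) (Real.exp_pos (ζ * v)).le
  refine le_trans (le_of_eq ?_) this
  ring

theorem Tht_upper (h : HM ν) (ζ y : ℝ) : Tht ν ζ y ≤ y ^ 2 / 2 * KM ν 2 ζ := by
  have i2 := h.km 0 ζ
  norm_num at i2
  unfold KM
  rw [← integral_const_mul]
  refine integral_mono (h.tht ζ y) (i2.const_mul _) fun v => ?_
  have := mul_le_mul_of_nonneg_left (one_sub_cos_upper (y * v)) (Real.exp_pos (ζ * v)).le
  refine this.trans (le_of_eq ?_)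
  ring

theorem tail_lim (a b c : ℝ) (ha : 0 < a) (hb : 0 < b) :
    Tendsto (fun ζ : ℝ => c * Real.exp (Real.exp (a * ζ) / 2 - b * Real.exp (2 * a * ζ))) atTop (nhds 0) := by
  have hX : Tendsto (fun ζ : ℝ => Real.exp (a * ζ)) atTop atTop :=
    Real.tendsto_exp_atTop.comp (tendsto_id.const_mul_atTop ha)
  have h1 : Tendsto (fun X : ℝ => X * (1 / 2 - b * X)) atTop atBot := by
    refine Tendsto.atTop_mul_atBot₀ tendsto_id ?_
    have : Tendsto (fun X : ℝ => b * X) atTop atTop := tendsto_id.const_mul_atTop hb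
    simpa [sub_eq_add_neg] using tendsto_atBot_add_const_left _ (1 / 2 : ℝ) (tendsto_neg_atTop_atBot.comp this)
  have h2 := (Real.tendsto_exp_atBot.comp (h1.comp hX)).const_mul c
  rw [mul_zero] at h2
  refine h2.congr fun ζ => ?_
  simp only [Function.comp]
  congr 2
  have : Real.exp (2 * a * ζ) = Real.exp (a * ζ) * Real.exp (a * ζ) := by
    rw [← Real.exp_add]; ring_nf
  rw [this]; ring

theorem laplace (h : HM ν) (hd : HD ν) (c δ : ℝ) (hc : 0 < c) (hδ : 0 < δ)
    (hb2 : ∀ ζ : ℝ, 0 ≤ ζ → ∀ y : ℝ, c * Real.exp (δ * ζ) * min 1 (y ^ 2) ≤ Tht ν ζ y)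
    (hr : Tendsto (fun ζ => KM ν 4 ζ / (KM ν 2 ζ) ^ 2) atTop (nhds 0))
    (h4 : ∀ ε : ℝ, 0 < ε → ∃ C : ℝ, 0 < C ∧ ∀ᶠ ζ in atTop, KM ν 4 ζ ≤ C * Real.exp (ε * ζ) * KM ν 2 ζ)
    (h2 : ∀ ε : ℝ, 0 < ε → ∃ C : ℝ, 0 < C ∧ ∀ᶠ ζ in atTop, KM ν 2 ζ ≤ C * Real.exp (Real.exp (ε * ζ))) :
    Tendsto (fun ζ : ℝ => ((Real.sqrt (KM ν 2 ζ) : ℝ) : ℂ) * ∫ y : ℝ, cexp (Phi ν ζ y)) atTop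
      (nhds ((Real.sqrt (2 * Real.pi) : ℝ) : ℂ)) := by
  have K4nn : ∀ ζ, 0 ≤ KM ν 4 ζ := fun ζ => integral_nonneg fun v => by positivity
  have K2pos : ∀ ζ, 0 ≤ ζ → 0 < KM ν 2 ζ := by
    intro ζ hζ
    have := hb2 ζ hζ 1
    have h' := Tht_upper h ζ 1
    have : 0 < c * Real.exp (δ * ζ) := by positivity
    norm_num at *
    linarith
  let A : ℝ → Set ℝ := fun ζ => {y | 2 * y ^ 2 * KM ν 4 ζ ≤ KM ν 2 ζ}
  have mA : ∀ ζ, MeasurableSet (A ζ) := fun ζ =>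
    measurableSet_le (by fun_prop) measurable_const
  have normE : ∀ ζ y, ‖cexp (Phi ν ζ y)‖ = Real.exp (- Tht ν ζ y) := fun ζ y => by
    rw [Complex.norm_exp, re_Phi h]
  obtain ⟨K, hK, hKb⟩ := hd 2
  have contE : ∀ ζ, Continuous fun y => cexp (Phi ν ζ y) := fun ζ => (Phi_cont h ζ).cexp
  have half : ∀ ζ, 0 ≤ ζ → ∀ y, Real.exp (- Tht ν ζ y / 2) ≤ Real.sqrt K * (1 + y ^ 2)⁻¹ := by
    intro ζ hζ y
    rw [Real.exp_half]
    refine (Real.sqrt_le_sqrt (hKb ζ hζ y)).trans (le_of_eq ?_)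
    rw [Real.sqrt_mul hK.le, ← inv_pow, Real.sqrt_sq (by positivity)]
  have intE : ∀ ζ, 0 ≤ ζ → Integrable fun y => cexp (Phi ν ζ y) := by
    intro ζ hζ
    refine (integrable_inv_one_add_sq.const_mul (Real.sqrt K)).mono' (contE ζ).aestronglyMeasurable
      (Eventually.of_forall fun y => ?_)
    rw [normE]
    refine le_trans (Real.exp_le_exp.2 ?_) (half ζ hζ y)
    linarith [Tht_nonneg (ν := ν) ζ y]
  -- main part
  have main : Tendsto (fun ζ : ℝ => ((Real.sqrt (KM ν 2 ζ) : ℝ) : ℂ) * ∫ y : ℝ, (A ζ).indicator (fun y => cexp (Phi ν ζ y)) y) atTop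
      (nhds ((Real.sqrt (2 * Real.pi) : ℝ) : ℂ)) := by
    have e1 : ∀ ζ, ((Real.sqrt (KM ν 2 ζ) : ℝ) : ℂ) * ∫ y : ℝ, (A ζ).indicator (fun y => cexp (Phi ν ζ y)) y
        = ∫ t : ℝ, (A ζ).indicator (fun y => cexp (Phi ν ζ y)) (t / Real.sqrt (KM ν 2 ζ)) := by
      intro ζ
      rw [Measure.integral_comp_div, abs_of_nonneg (Real.sqrt_nonneg _), Complex.real_smul]
    have e2 : ((Real.sqrt (2 * Real.pi) : ℝ) : ℂ) = ∫ t : ℝ, ((Real.exp (-(1/2) * t ^ 2) : ℝ) : ℂ) := by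
      rw [integral_complex_ofReal, integral_gaussian]
      congr 2; field_simp
    simp_rw [e1]
    rw [e2]
    refine tendsto_integral_filter_of_dominated_convergence (fun t => Real.exp (-(1/4) * t ^ 2)) ?_ ?_ ?_ ?_
    · refine Eventually.of_forall fun ζ => ?_
      apply Measurable.aestronglyMeasurable
      exact ((contE ζ).measurable.indicator (mA ζ)).comp (by fun_prop)
    · filter_upwards [eventually_ge_atTop 0] with ζ hζ
      refine Eventually.of_forall fun t => ?_
      by_cases ht : t / Real.sqrt (KM ν 2 ζ) ∈ A ζ
      · rw [indicator_of_mem ht, normE]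
        apply Real.exp_le_exp.2
        have l := Tht_lower h ζ (t / Real.sqrt (KM ν 2 ζ))
        have hp := K2pos ζ hζ
        have hsq : (t / Real.sqrt (KM ν 2 ζ)) ^ 2 * KM ν 2 ζ = t ^ 2 := by
          rw [div_pow, Real.sq_sqrt hp.le]; field_simp
        set y := t / Real.sqrt (KM ν 2 ζ)
        have ht' : 2 * y ^ 2 * KM ν 4 ζ ≤ KM ν 2 ζ := ht
        have := mul_le_mul_of_nonneg_left ht' (sq_nonneg y)
        nlinarith
      · rw [indicator_of_notMem ht, norm_zero]; positivity
    · exact integrable_exp_neg_mul_sq (by norm_num)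
    · refine Eventually.of_forall fun t => ?_
      let η : ℝ → ℝ := fun ζ => Real.sqrt (KM ν 4 ζ / (KM ν 2 ζ) ^ 2) + Real.exp (-ζ)
      have hη : Tendsto η atTop (nhds 0) := by
        have a := (Real.continuous_sqrt.tendsto 0).comp hr
        have b : Tendsto (fun ζ : ℝ => Real.exp (-ζ)) atTop (nhds 0) := Real.tendsto_exp_neg_atTop_nhds_zero
        simpa [η] using a.add b
      have hPhi : Tendsto (fun ζ => Phi ν ζ (t / Real.sqrt (KM ν 2 ζ)) + ((t ^ 2 / 2 : ℝ) : ℂ)) atTop (nhds 0) := by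
        have hz : Tendsto (fun ζ => 2 * (t ^ 2 + t ^ 4) * η ζ) atTop (nhds 0) := by
          simpa using hη.const_mul (2 * (t ^ 2 + t ^ 4))
        refine squeeze_zero_norm' ?_ hz
        filter_upwards [eventually_ge_atTop 0] with ζ hζ
        have hp := K2pos ζ hζ
        have hηp : 0 < η ζ := by
          have : 0 < Real.exp (-ζ) := Real.exp_pos _
          have := Real.sqrt_nonneg (KM ν 4 ζ / (KM ν 2 ζ) ^ 2)
          simp only [η]; linarith
        have ap := Phi_approx h ζ (t / Real.sqrt (KM ν 2 ζ)) (η ζ) hηp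
        have hsq : (t / Real.sqrt (KM ν 2 ζ)) ^ 2 = t ^ 2 / KM ν 2 ζ := by
          rw [div_pow, Real.sq_sqrt hp.le]
        have h4q : (t / Real.sqrt (KM ν 2 ζ)) ^ 4 = t ^ 4 / KM ν 2 ζ ^ 2 := by
          rw [show (4:ℕ) = 2 * 2 from rfl, pow_mul, hsq, div_pow, ← pow_mul]
        rw [hsq, h4q] at ap
        have s1 : t ^ 2 / KM ν 2 ζ * KM ν 2 ζ / 2 = t ^ 2 / 2 := by field_simp
        rw [s1] at ap
        refine ap.trans ?_
        have s2 : η ζ * (t ^ 2 / KM ν 2 ζ) * KM ν 2 ζ = η ζ * t ^ 2 := by field_simp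
        rw [s2]
        have s3 : KM ν 4 ζ / KM ν 2 ζ ^ 2 / η ζ ≤ η ζ := by
          rw [div_le_iff₀ hηp, ← sq]
          have hnn : 0 ≤ KM ν 4 ζ / KM ν 2 ζ ^ 2 := div_nonneg (K4nn ζ) (by positivity)
          rw [← Real.sqrt_le_left hηp.le]
          simp only [η]; linarith [Real.exp_pos (-ζ)]
        have s4 : t ^ 4 / KM ν 2 ζ ^ 2 * KM ν 4 ζ / η ζ = t ^ 4 * (KM ν 4 ζ / KM ν 2 ζ ^ 2 / η ζ) := by ring
        rw [s4]
        have := mul_le_mul_of_nonneg_left s3 (by positivity : 0 ≤ t ^ 4)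
        linarith
      have hlim : Tendsto (fun ζ => cexp (Phi ν ζ (t / Real.sqrt (KM ν 2 ζ)))) atTop (nhds ((Real.exp (-(1/2) * t ^ 2) : ℝ) : ℂ)) := by
        have := (hPhi.sub_const ((t ^ 2 / 2 : ℝ) : ℂ)).cexp
        simp only [add_sub_cancel_right, zero_sub] at this
        convert this using 2
        rw [Complex.ofReal_exp]; congr 1; push_cast; ring
      refine hlim.congr' ?_
      have ev : ∀ᶠ ζ in atTop, 2 * t ^ 2 * (KM ν 4 ζ / (KM ν 2 ζ) ^ 2) < 1 := by
        have := hr.const_mul (2 * t ^ 2)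
        rw [mul_zero] at this
        exact this.eventually_lt_const one_pos
      filter_upwards [ev, eventually_ge_atTop 0] with ζ h1 hζ
      rw [indicator_of_mem]
      have hp := K2pos ζ hζ
      show 2 * (t / Real.sqrt (KM ν 2 ζ)) ^ 2 * KM ν 4 ζ ≤ KM ν 2 ζ
      rw [div_pow, Real.sq_sqrt hp.le]
      rw [← mul_div_assoc, div_lt_one (by positivity)] at h1
      rw [← mul_div_assoc, div_mul_eq_mul_div, div_le_iff₀ hp]
      nlinarith
  have tail : Tendsto (fun ζ : ℝ => ((Real.sqrt (KM ν 2 ζ) : ℝ) : ℂ) * ∫ y : ℝ, (A ζ)ᶜ.indicator (fun y => cexp (Phi ν ζ y)) y) atTop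
      (nhds 0) := by
    obtain ⟨C, hC, hC4⟩ := h4 (δ / 2) (by positivity)
    obtain ⟨C', hC', hC2⟩ := h2 (δ / 4) (by positivity)
    set m := min 1 (1 / (2 * C)) with hm
    have hm0 : 0 < m := by positivity
    set D := ∫ y : ℝ, Real.sqrt K * (1 + y ^ 2)⁻¹ with hD
    have hD0 : 0 ≤ D := integral_nonneg fun y => by positivity
    have := tail_lim (δ / 4) (c * m / 2) (Real.sqrt C' * D) (by positivity) (by positivity)
    refine squeeze_zero_norm' ?_ this
    filter_upwards [hC4, hC2, eventually_ge_atTop 0] with ζ hk4 hk2 hζ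
    have hp := K2pos ζ hζ
    have b1 : ‖∫ y : ℝ, (A ζ)ᶜ.indicator (fun y => cexp (Phi ν ζ y)) y‖ ≤ Real.exp (-(c * m / 2 * Real.exp (2 * (δ/4) * ζ))) * D := by
      rw [hD, ← integral_const_mul]
      refine norm_integral_le_of_norm_le ((integrable_inv_one_add_sq.const_mul _).const_mul _) (Eventually.of_forall fun y => ?_)
      by_cases hy : y ∈ A ζ
      · rw [indicator_of_notMem (by simpa using hy), norm_zero]; positivity
      · rw [indicator_of_mem (by simpa using hy), normE]
        have hy' : KM ν 2 ζ < 2 * y ^ 2 * KM ν 4 ζ := by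
          simpa [A] using hy
        have g1 : 1 < 2 * y ^ 2 * (C * Real.exp (δ / 2 * ζ)) := by
          have : KM ν 2 ζ < 2 * y ^ 2 * (C * Real.exp (δ / 2 * ζ)) * KM ν 2 ζ := by
            refine hy'.trans_le ?_
            rw [mul_assoc (2 * y ^ 2)]
            gcongr
          by_contra hcon
          push Not at hcon
          nlinarith
        have g2 : m * Real.exp (-(δ / 2 * ζ)) ≤ min 1 (y ^ 2) := by
          refine le_min ?_ ?_
          · have : Real.exp (-(δ / 2 * ζ)) ≤ 1 := Real.exp_le_one_iff.2 (by have : 0 ≤ δ / 2 * ζ := by positivity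
                                                                            linarith)
            exact mul_le_one₀ (min_le_left _ _) (Real.exp_pos _).le this
          · have : m ≤ 1 / (2 * C) := min_le_right _ _
            calc _ ≤ 1 / (2 * C) * Real.exp (-(δ / 2 * ζ)) := by gcongr
              _ ≤ 1 / (2 * C) * Real.exp (-(δ / 2 * ζ)) * (2 * y ^ 2 * (C * Real.exp (δ / 2 * ζ))) :=
                le_mul_of_one_le_right (by positivity) g1.le
              _ = y ^ 2 := by rw [Real.exp_neg]; field_simp
        have g3 := hb2 ζ hζ y
        have g4 : c * m * Real.exp (2 * (δ/4) * ζ) ≤ Tht ν ζ y := by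
          refine le_trans ?_ g3
          have : c * m * Real.exp (2 * (δ/4) * ζ) = c * Real.exp (δ * ζ) * (m * Real.exp (-(δ / 2 * ζ))) := by
            have : Real.exp (2 * (δ/4) * ζ) = Real.exp (δ * ζ) * Real.exp (-(δ / 2 * ζ)) := by
              rw [← Real.exp_add]; ring_nf
            rw [this]; ring
          rw [this]
          gcongr
        have : Real.exp (- Tht ν ζ y) = Real.exp (- Tht ν ζ y / 2) * Real.exp (- Tht ν ζ y / 2) := by
          rw [← Real.exp_add]; ring_nf
        rw [this]
        refine mul_le_mul (Real.exp_le_exp.2 (by linarith)) (half ζ hζ y) (Real.exp_pos _).le (Real.exp_pos _).le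
    have b2 : Real.sqrt (KM ν 2 ζ) ≤ Real.sqrt C' * Real.exp (Real.exp (δ / 4 * ζ) / 2) := by
      rw [Real.exp_half, ← Real.sqrt_mul hC'.le]
      exact Real.sqrt_le_sqrt hk2
    rw [norm_mul, Complex.norm_real, Real.norm_eq_abs, abs_of_nonneg (Real.sqrt_nonneg _)]
    refine (mul_le_mul b2 b1 (norm_nonneg _) (by positivity)).trans (le_of_eq ?_)
    rw [sub_eq_add_neg, Real.exp_add]; ring
  have := main.add tail
  rw [add_zero] at this
  refine this.congr' ?_
  filter_upwards [eventually_ge_atTop 0] with ζ hζ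
  rw [← mul_add, ← integral_add ((intE ζ hζ).indicator (mA ζ)) ((intE ζ hζ).indicator (mA ζ).compl)]
  congr 2; ext y
  exact congrFun (indicator_self_add_compl (A ζ) (fun y => cexp (Phi ν ζ y))) y

theorem K1_bound (h : HM ν) (ζ η : ℝ) (h0 : 0 ≤ η) (h1 : η ≤ ζ) :
    K1 ν η ≤ ∫ v, ζ * (v ^ 2 * Real.exp (ζ * |v|)) ∂ν := by
  have h2 := h0.trans h1
  refine integral_mono (h.k1 η) ((h _).const_mul _) fun v => ?_
  refine (le_abs_self _).trans ?_
  rw [abs_mul]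
  refine (mul_le_mul_of_nonneg_left (rex1 _) (abs_nonneg _)).trans ?_
  rw [abs_mul, abs_of_nonneg h0, ← sq_abs v]
  calc _ = η * (|v| ^ 2 * Real.exp (η * |v|)) := by ring
    _ ≤ _ := by gcongr


theorem asym (h : HM ν) (hd : HD ν) 
    (hL : Tendsto (fun ζ : ℝ => ((Real.sqrt (KM ν 2 ζ) : ℝ) : ℂ) * ∫ y : ℝ, cexp (Phi ν ζ y)) atTop
      (nhds ((Real.sqrt (2 * Real.pi) : ℝ) : ℂ)))
    (ζ : ℝ → ℝ) (hζ : ∀ x : ℝ, 0 ≤ x → 0 ≤ ζ x ∧ K1 ν (ζ x) = x) (p : ℝ → ℝ)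
    (hp : ∀ x : ℝ, p x = (1 / (2 * Real.pi)) * (∫ z : ℝ, cexp (I * x * z + Psi ν z)).re) :
    Tendsto (fun x => p x * Real.sqrt (2 * Real.pi * KM ν 2 (ζ x)) * Real.exp (x * ζ x - K0 ν (ζ x)))
      atTop (nhds 1) := by
  have hinf : Tendsto ζ atTop atTop := by
    refine tendsto_atTop.2 fun b => ?_
    filter_upwards [eventually_ge_atTop 0, eventually_gt_atTop (∫ v, b * (v ^ 2 * Real.exp (b * |v|)) ∂ν)] with x hx hxb
    by_contra hcon
    push Not at hcon
    obtain ⟨a, e⟩ := hζ x hx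
    have := K1_bound h b (ζ x) a hcon.le
    linarith
  have l1 := hL.comp hinf
  have l2 := (Complex.continuous_re.tendsto _).comp l1
  have l3 := l2.const_mul (Real.sqrt (2 * Real.pi) / (2 * Real.pi))
  have e0 : Real.sqrt (2 * Real.pi) / (2 * Real.pi) * (((Real.sqrt (2 * Real.pi) : ℝ) : ℂ)).re = 1 := by
    rw [Complex.ofReal_re, div_mul_eq_mul_div, Real.mul_self_sqrt (by positivity)]
    exact div_self (by positivity)
  rw [e0] at l3
  refine l3.congr' ?_
  filter_upwards [eventually_ge_atTop 0] with x hx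
  obtain ⟨a, e⟩ := hζ x hx
  simp only [Function.comp]
  rw [hp, shift h hd x (ζ x) a]
  have : ∀ y : ℝ, cexp (I * x * (y + ζ x * I) + Psi ν (y + ζ x * I))
      = ((Real.exp (-(x * ζ x - K0 ν (ζ x))) : ℝ) : ℂ) * cexp (Phi ν (ζ x) y) := by
    intro y
    rw [Psi_eq h, e, Complex.ofReal_exp, ← Complex.exp_add]
    congr 1
    push_cast
    linear_combination (x * ζ x : ℂ) * I_sq
  simp_rw [this]
  rw [integral_const_mul, Complex.re_ofReal_mul, Complex.re_ofReal_mul, Real.sqrt_mul (by positivity) (KM ν 2 (ζ x)), Real.exp_neg]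
  have := Real.exp_pos (x * ζ x - K0 ν (ζ x))
  field_simp


noncomputable def nuM (μ : Measure ℝ) (lam : ℝ) : Measure ℝ :=
  Measure.map (fun q : ℝ × ℝ => Real.exp (lam * q.1) * q.2) ((volume.restrict (Iic 0)).prod μ)

variable {μ : Measure ℝ} {lam : ℝ}

theorem cont_q : Continuous (fun q : ℝ × ℝ => Real.exp (lam * q.1) * q.2) := by fun_prop

theorem sfin (hμ0 : μ {0} = 0) (hμint : Integrable (fun u : ℝ => min 1 (u ^ 2)) μ) : SigmaFinite μ := by
  refine ⟨⟨⟨fun n : ℕ => {0} ∪ {u : ℝ | (1 / ((n : ℝ) + 1)) ≤ min 1 (u ^ 2)}, fun _ => trivial, fun n => ?_, ?_⟩⟩⟩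
  · refine (measure_union_le _ _).trans_lt ?_
    rw [hμ0, zero_add]
    have := hμint.measure_norm_ge_lt_top (ε := 1 / ((n : ℝ) + 1)) (by positivity)
    refine (measure_mono fun u hu => ?_).trans_lt this
    simp only [mem_ofPred_eq] at hu ⊢
    exact hu.trans (le_abs_self _)
  · ext u
    simp only [mem_iUnion, mem_univ, iff_true]
    by_cases h : u = 0
    · exact ⟨0, Or.inl h⟩
    · have : 0 < min 1 (u ^ 2) := lt_min one_pos (by positivity)
      obtain ⟨n, hn⟩ := exists_nat_one_div_lt this
      exact ⟨n, Or.inr hn.le⟩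

theorem HM_mu (hμint : Integrable (fun u : ℝ => min 1 (u ^ 2)) μ)
    (hμexp : ∀ C : ℝ, Integrable (fun u : ℝ => Real.exp (C * u)) (μ.restrict {u : ℝ | 1 ≤ |u|})) : HM μ := by
  intro C
  have ms : MeasurableSet {u : ℝ | 1 ≤ |u|} := measurableSet_le measurable_const measurable_norm
  have hc : Continuous (fun u : ℝ => u ^ 2 * Real.exp (C * |u|)) := by fun_prop
  rw [← integrableOn_univ, ← union_compl_self {u : ℝ | 1 ≤ |u|}]
  refine IntegrableOn.union ?_ ?_
  · have h1 := ((hμexp (|C| + 1)).add (hμexp (-(|C| + 1)))).const_mul 2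
    refine Integrable.mono' h1 hc.aestronglyMeasurable (Eventually.of_forall fun u => ?_)
    have h2 : u ^ 2 ≤ 2 * Real.exp |u| := by
      have := Real.pow_div_factorial_le_exp |u| (abs_nonneg _) 2
      rw [sq_abs] at this
      norm_num at this; linarith
    have h3 : Real.exp (C * |u|) ≤ Real.exp (|C| * |u|) := Real.exp_le_exp.2 (by gcongr; exact le_abs_self C)
    have h4 : Real.exp ((|C| + 1) * |u|) ≤ Real.exp ((|C| + 1) * u) + Real.exp (-(|C| + 1) * u) := by
      rcases abs_cases u with ⟨e, _⟩ | ⟨e, _⟩ <;> rw [e]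
      · linarith [Real.exp_pos (-(|C| + 1) * u)]
      · rw [show (|C| + 1) * -u = -(|C| + 1) * u by ring]
        linarith [Real.exp_pos ((|C| + 1) * u)]
    rw [Real.norm_eq_abs, abs_of_nonneg (by positivity)]
    calc _ ≤ 2 * Real.exp |u| * Real.exp (|C| * |u|) := by gcongr
      _ = 2 * Real.exp ((|C| + 1) * |u|) := by
        rw [mul_assoc, ← Real.exp_add]; ring_nf
      _ ≤ _ := by simp only [Pi.add_apply]; linarith
  · refine Integrable.mono' (hμint.integrableOn.const_mul (Real.exp |C|)) hc.aestronglyMeasurable ?_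
    rw [ae_restrict_iff' ms.compl]
    refine Eventually.of_forall fun u hu => ?_
    simp only [mem_compl_iff, mem_ofPred_eq, not_le] at hu
    have h1 : u ^ 2 ≤ 1 := by rw [← sq_abs]; exact pow_le_one₀ (abs_nonneg _) hu.le
    rw [min_eq_right h1, Real.norm_eq_abs, abs_of_nonneg (by positivity), mul_comm]
    gcongr
    calc C * |u| ≤ |C| * |u| := by gcongr; exact le_abs_self C
      _ ≤ |C| * 1 := by gcongr
      _ = _ := mul_one _

theorem int_exp (a : ℝ) (ha : 0 < a) : IntegrableOn (fun s : ℝ => Real.exp (a * s)) (Iic 0) :=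
  integrableOn_exp_mul_Iic ha 0

theorem HM_nu [SigmaFinite μ] (h : HM μ) (hlam : 0 < lam) : HM (nuM μ lam) := by
  intro C
  unfold nuM
  rw [integrable_map_measure (by apply Continuous.aestronglyMeasurable; fun_prop) cont_q.aemeasurable]
  have h1 := (int_exp (2 * lam) (by positivity)).integrable.mul_prod (h |C|)
  refine h1.mono' ?_ ?_
  · apply Continuous.aestronglyMeasurable
    have := cont_q (lam := lam)
    fun_prop
  · have : ∀ᵐ q : ℝ × ℝ ∂((volume.restrict (Iic (0:ℝ))).prod μ), q.1 ≤ 0 := by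
      have h0 : ∀ᵐ s : ℝ ∂(volume.restrict (Iic (0:ℝ))), s ≤ 0 := ae_restrict_mem measurableSet_Iic
      exact Measure.quasiMeasurePreserving_fst.ae h0
    filter_upwards [this] with q hq
    simp only [Function.comp]
    rw [Real.norm_eq_abs, abs_of_nonneg (by positivity), mul_pow, abs_mul, Real.abs_exp, ← Real.exp_nat_mul]
    have e1 : Real.exp (lam * q.1) ≤ 1 := Real.exp_le_one_iff.2 (by nlinarith)
    have : C * (Real.exp (lam * q.1) * |q.2|) ≤ |C| * |q.2| := by
      calc _ ≤ |C| * (Real.exp (lam * q.1) * |q.2|) := by gcongr; exact le_abs_self C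
        _ ≤ |C| * (1 * |q.2|) := by gcongr
        _ = _ := by ring
    have e2 : ((2:ℕ):ℝ) * (lam * q.1) = 2 * lam * q.1 := by push_cast; ring
    rw [e2, mul_assoc]
    gcongr

section
variable {E : Type*} [NormedAddCommGroup E] [SecondCountableTopology E]

theorem nu_int [SigmaFinite μ] {f : ℝ → E} (hf : Continuous f) (hi : Integrable f (nuM μ lam)) :
    Integrable (fun q : ℝ × ℝ => f (Real.exp (lam * q.1) * q.2)) ((volume.restrict (Iic 0)).prod μ) := by
  unfold nuM at hi
  rwa [integrable_map_measure hf.aestronglyMeasurable cont_q.aemeasurable] at hi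

theorem nu_eq [NormedSpace ℝ E] [SigmaFinite μ] {f : ℝ → E} (hf : Continuous f) (hi : Integrable f (nuM μ lam)) :
    ∫ v, f v ∂(nuM μ lam) = ∫ s in Iic (0:ℝ), ∫ u, f (Real.exp (lam * s) * u) ∂μ := by
  have := nu_int hf hi
  unfold nuM
  rw [integral_map cont_q.aemeasurable hf.aestronglyMeasurable, integral_prod _ this]

theorem nu_eq' [NormedSpace ℝ E] [SigmaFinite μ] {f : ℝ → E} (hf : Continuous f) (hi : Integrable f (nuM μ lam)) :
    ∫ v, f v ∂(nuM μ lam) = ∫ u, (∫ s in Iic (0:ℝ), f (Real.exp (lam * s) * u)) ∂μ := by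
  have := nu_int hf hi
  unfold nuM
  rw [integral_map cont_q.aemeasurable hf.aestronglyMeasurable, integral_prod_symm _ this]
end

theorem kM0 [SigmaFinite μ] (h : HM (nuM μ lam)) (ζ : ℝ) :
    kernelM μ (Iic 0) (fun s => Real.exp (lam * s)) 0 ζ = K0 (nuM μ lam) ζ := by
  unfold kernelM K0
  rw [nu_eq (by fun_prop) (h.k0 ζ)]
  congr 1; ext s
  rw [pow_zero, one_mul, levyM]
  congr 1; ext u; ring_nf

theorem kM1 [SigmaFinite μ] (h : HM (nuM μ lam)) (ζ : ℝ) :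
    kernelM μ (Iic 0) (fun s => Real.exp (lam * s)) 1 ζ = K1 (nuM μ lam) ζ := by
  unfold kernelM K1
  rw [nu_eq (by fun_prop) (h.k1 ζ)]
  congr 1; ext s
  rw [pow_one, levyM, ← integral_const_mul]
  congr 1; ext u; ring_nf

theorem levyM_eq (k : ℕ) (ζ : ℝ) : levyM μ (k + 2) ζ = KM μ (k + 2) ζ := by
  rw [levyM, KM]

theorem kMs [SigmaFinite μ] (h : HM (nuM μ lam)) (k : ℕ) (ζ : ℝ) :
    KM (nuM μ lam) (k + 2) ζ = ∫ s in Iic (0:ℝ), Real.exp (lam * s) ^ (k + 2) * KM μ (k + 2) (Real.exp (lam * s) * ζ) := by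
  unfold KM
  rw [nu_eq (by fun_prop) (h.km k ζ)]
  congr 1; ext s
  rw [← integral_const_mul]
  congr 1; ext u; ring_nf

theorem kMs_int [SigmaFinite μ] (h : HM (nuM μ lam)) (k : ℕ) (ζ : ℝ) :
    IntegrableOn (fun s => Real.exp (lam * s) ^ (k + 2) * KM μ (k + 2) (Real.exp (lam * s) * ζ)) (Iic 0) := by
  have := (nu_int (by fun_prop) (h.km k ζ)).integral_prod_left
  refine this.congr (Eventually.of_forall fun s => ?_)
  unfold KM
  simp only
  rw [← integral_const_mul]
  congr 1; ext u; ring_nf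

theorem kM2 [SigmaFinite μ] (h : HM (nuM μ lam)) (ζ : ℝ) :
    kernelM μ (Iic 0) (fun s => Real.exp (lam * s)) 2 ζ = KM (nuM μ lam) 2 ζ := by
  rw [kMs h 0 ζ]
  unfold kernelM
  simp only [levyM_eq 0]

theorem kPsi [SigmaFinite μ] (h : HM (nuM μ lam)) (z : ℂ) :
    kernelPsi μ (Iic 0) (fun s => Real.exp (lam * s)) z = Psi (nuM μ lam) z := by
  unfold kernelPsi Psi
  rw [nu_eq (by fun_prop) (h.psi z)]

theorem osc_lower (hlam : 0 < lam) (w b : ℝ) (hw : 0 < w) (hb : 0 ≤ b) :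
    b - 2 * Real.exp (lam * b) / (lam * w) ≤ ∫ s in (-b)..0, (1 - Real.cos (w * Real.exp (lam * s))) := by
  let G : ℝ → ℝ := fun s => s - Real.sin (w * Real.exp (lam * s)) * Real.exp (-(lam * s)) / (lam * w) + Real.exp (-(lam * s)) / (lam * w)
  let G' : ℝ → ℝ := fun s => 1 - Real.cos (w * Real.exp (lam * s)) + Real.sin (w * Real.exp (lam * s)) * Real.exp (-(lam * s)) / w
    - Real.exp (-(lam * s)) / w
  have hG : ∀ s, HasDerivAt G (G' s) s := by
    intro s
    have h0 : HasDerivAt (fun s : ℝ => lam * s) lam s := by simpa using (hasDerivAt_id s).const_mul lam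
    have h1 := (h0.exp.const_mul w).sin
    have h2 := h0.fun_neg.exp
    have h3 := ((hasDerivAt_id s).sub ((h1.mul h2).div_const (lam * w))).add (h2.div_const (lam * w))
    refine h3.congr_deriv ?_
    simp only [G']
    have : Real.exp (lam * s) * Real.exp (-(lam * s)) = 1 := by rw [← Real.exp_add]; simp
    field_simp
    linear_combination (-Real.cos (w * Real.exp (lam * s)) * w) * this
  have cG : Continuous G' := by
    simp only [G']; fun_prop
  have e := intervalIntegral.integral_eq_sub_of_hasDerivAt (a := -b) (b := 0) (fun s _ => hG s) (cG.intervalIntegrable _ _)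
  have le : ∫ s in (-b)..0, G' s ≤ ∫ s in (-b)..0, (1 - Real.cos (w * Real.exp (lam * s))) := by
    refine intervalIntegral.integral_mono_on (by linarith) (cG.intervalIntegrable _ _)
      (Continuous.intervalIntegrable (by fun_prop) _ _) fun s _ => ?_
    simp only [G']
    have : Real.sin (w * Real.exp (lam * s)) * Real.exp (-(lam * s)) / w ≤ 1 * Real.exp (-(lam * s)) / w := by
      gcongr; exact Real.sin_le_one _
    rw [one_mul] at this
    linarith
  refine le_trans ?_ le
  rw [e]
  simp only [G]
  have hlw : 0 < lam * w := by positivity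
  have a1 : 0 ≤ (1 - Real.sin w) / (lam * w) := div_nonneg (by linarith [Real.sin_le_one w]) hlw.le
  have a2 : (-1) * Real.exp (lam * b) / (lam * w) ≤ Real.sin (w * Real.exp (lam * -b)) * Real.exp (lam * b) / (lam * w) := by
    gcongr; exact Real.neg_one_le_sin _
  have e2 : -(lam * -b) = lam * b := by ring
  rw [e2]
  simp only [mul_zero, Real.exp_zero, mul_one, neg_zero]
  have a3 : (1 - Real.sin w) / (lam * w) = 1 / (lam * w) - Real.sin w / (lam * w) := by ring
  have a4 : 2 * Real.exp (lam * b) / (lam * w) = Real.exp (lam * b) / (lam * w) + Real.exp (lam * b) / (lam * w) := by ring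
  have a5 : (-1) * Real.exp (lam * b) / (lam * w) = - (Real.exp (lam * b) / (lam * w)) := by ring
  rw [a3] at a1; rw [a5] at a2; rw [a4]
  linarith

theorem osc_mono (w a b : ℝ) (ha : 0 ≤ a) (hab : a ≤ b) :
    ∫ s in (-a)..0, (1 - Real.cos (w * Real.exp (lam * s))) ≤ ∫ s in (-b)..0, (1 - Real.cos (w * Real.exp (lam * s))) := by
  refine intervalIntegral.integral_mono_interval (by linarith) (by linarith) le_rfl
    (Eventually.of_forall fun s => ?_) (Continuous.intervalIntegrable (by fun_prop) _ _)
  simpa using Real.cos_le_one _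

theorem osc_min (hlam : 0 < lam) : ∃ c : ℝ, 0 < c ∧ ∀ w : ℝ, 0 < w →
    c * min 1 (w ^ 2) ≤ ∫ s in (-(4 / lam))..0, (1 - Real.cos (w * Real.exp (lam * s))) := by
  refine ⟨Real.exp (-8) / (4 * lam), by positivity, fun w hw => ?_⟩
  have e8 : Real.exp (-8) ≤ 1 := Real.exp_le_one_iff.2 (by norm_num)
  by_cases h : 12 ≤ w
  · have h1 := osc_lower hlam w (1 / lam) hw (by positivity)
    have h2 := osc_mono (lam := lam) w (1 / lam) (4 / lam) (by positivity) (by gcongr; norm_num)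
    refine le_trans ?_ (h1.trans h2)
    have h3 : lam * (1 / lam) = 1 := by field_simp
    rw [h3]
    have h4 : Real.exp 1 ≤ 3 := by linarith [Real.exp_one_lt_d9]
    have h5 : 2 * Real.exp 1 / (lam * w) ≤ 2 * 3 / (lam * 12) := by gcongr
    have h6 : Real.exp (-8) / (4 * lam) * min 1 (w ^ 2) ≤ 1 / (4 * lam) * 1 := by
      gcongr
      exact min_le_left _ _
    have h7 : 1 / (4 * lam) * 1 ≤ 1 / lam - 2 * 3 / (lam * 12) := by
      have : 1 / lam - 2 * 3 / (lam * 12) - 1 / (4 * lam) * 1 = 1 / (4 * lam) := by field_simp; norm_num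
      have : 0 < 1 / (4 * lam) := by positivity
      linarith
    linarith
  · push Not at h
    have h1 : ∫ s in (-(4 / lam))..(-(3 / lam)), (1 - Real.cos (w * Real.exp (lam * s)))
        ≤ ∫ s in (-(4 / lam))..0, (1 - Real.cos (w * Real.exp (lam * s))) := by
      refine intervalIntegral.integral_mono_interval le_rfl (by gcongr; norm_num) (by rw [neg_nonpos]; positivity)
        (Eventually.of_forall fun s => ?_) (Continuous.intervalIntegrable (by fun_prop) _ _)
      simpa using Real.cos_le_one _
    refine le_trans ?_ h1
    have h2 : ∫ s in (-(4 / lam))..(-(3 / lam)), (w ^ 2 * Real.exp (-8) / 4)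
        ≤ ∫ s in (-(4 / lam))..(-(3 / lam)), (1 - Real.cos (w * Real.exp (lam * s))) := by
      refine intervalIntegral.integral_mono_on (by gcongr; norm_num) (by simp)
        (Continuous.intervalIntegrable (by fun_prop) _ _) fun s hs => ?_
      have s1 : lam * s ≤ -3 := by
        have := mul_le_mul_of_nonneg_left hs.2 hlam.le
        have e : lam * -(3 / lam) = -3 := by field_simp
        linarith
      have s2 : -4 ≤ lam * s := by
        have := mul_le_mul_of_nonneg_left hs.1 hlam.le
        have e : lam * -(4 / lam) = -4 := by field_simp
        linarith
      have t1 : Real.exp (lam * s) ≤ Real.exp (-3) := Real.exp_le_exp.2 s1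
      have t2 : Real.exp (-4) ≤ Real.exp (lam * s) := Real.exp_le_exp.2 s2
      have t3 : Real.exp (-3) ≤ 1 / 12 := by
        rw [Real.exp_neg, inv_eq_one_div]
        have : (12:ℝ) ≤ Real.exp 3 := by
          have e : Real.exp 3 = Real.exp 1 ^ 3 := by rw [← Real.exp_nat_mul]; norm_num
          rw [e]
          have : (2.7:ℝ) ≤ Real.exp 1 := by linarith [Real.exp_one_gt_d9]
          calc (12:ℝ) ≤ 2.7 ^ 3 := by norm_num
            _ ≤ _ := by gcongr
        gcongr
      set v := w * Real.exp (lam * s) with hv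
      have v0 : 0 ≤ v := by positivity
      have v1 : v ≤ 1 := by
        calc v ≤ 12 * (1 / 12) := by rw [hv]; gcongr; linarith
          _ = 1 := by norm_num
      have v2 : w ^ 2 * Real.exp (-8) ≤ v ^ 2 := by
        have : w ^ 2 * Real.exp (-8) = (w * Real.exp (-4)) ^ 2 := by
          rw [mul_pow, ← Real.exp_nat_mul]; norm_num
        rw [this, hv]; gcongr
      have cb := Real.cos_bound (x := v) (by rwa [abs_of_nonneg v0])
      rw [abs_of_nonneg v0, abs_le] at cb
      have : v ^ 4 ≤ v ^ 2 := pow_le_pow_of_le_one v0 v1 (by norm_num)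
      linarith [cb.2]
    refine le_trans ?_ h2
    rw [intervalIntegral.integral_const, smul_eq_mul]
    have : min 1 (w ^ 2) ≤ w ^ 2 := min_le_right _ _
    calc _ ≤ Real.exp (-8) / (4 * lam) * w ^ 2 := by gcongr
      _ = _ := by field_simp; ring

noncomputable def Inn (lam ζ y u : ℝ) : ℝ :=
  ∫ s in Iic (0:ℝ), Real.exp (ζ * (Real.exp (lam * s) * u)) * (1 - Real.cos (y * (Real.exp (lam * s) * u)))

theorem Inn_ge (hlam : 0 < lam) (ζ y u b : ℝ) (hζ : 0 ≤ ζ) (hu : 0 < u) (hb : 0 ≤ b) :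
    Real.exp (ζ * (Real.exp (-(lam * b)) * u)) * ∫ s in (-b)..0, (1 - Real.cos (|y| * u * Real.exp (lam * s)))
      ≤ Inn lam ζ y u := by
  have nn : ∀ s : ℝ, 0 ≤ Real.exp (ζ * (Real.exp (lam * s) * u)) * (1 - Real.cos (y * (Real.exp (lam * s) * u))) := fun s =>
    mul_nonneg (Real.exp_pos _).le (by linarith [Real.cos_le_one (y * (Real.exp (lam * s) * u))])
  have hint : IntegrableOn (fun s => Real.exp (ζ * (Real.exp (lam * s) * u)) * (1 - Real.cos (y * (Real.exp (lam * s) * u)))) (Iic 0) := by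
    refine Integrable.mono' ((int_exp (2 * lam) (by positivity)).const_mul (Real.exp (ζ * u) * (y * u) ^ 2)) (Continuous.aestronglyMeasurable (by fun_prop)) ?_
    rw [ae_restrict_iff' measurableSet_Iic]
    refine Eventually.of_forall fun s hs => ?_
    rw [Real.norm_eq_abs, abs_of_nonneg (nn s)]
    have e1 : Real.exp (lam * s) ≤ 1 := Real.exp_le_one_iff.2 (mul_nonpos_of_nonneg_of_nonpos hlam.le hs)
    have e2 : Real.exp (ζ * (Real.exp (lam * s) * u)) ≤ Real.exp (ζ * u) := by
      apply Real.exp_le_exp.2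
      calc _ ≤ ζ * (1 * u) := by gcongr
        _ = _ := by ring
    have e3 := one_sub_cos_upper (y * (Real.exp (lam * s) * u))
    have e5 : Real.exp (2 * lam * s) = Real.exp (lam * s) ^ 2 := by
      rw [← Real.exp_nat_mul]; congr 1; push_cast; ring
    rw [mul_assoc, e5]
    refine mul_le_mul e2 ?_ (by linarith [Real.cos_le_one (y * (Real.exp (lam * s) * u))]) (Real.exp_pos _).le
    refine e3.trans ?_
    have : (y * (Real.exp (lam * s) * u)) ^ 2 = (y * u) ^ 2 * Real.exp (lam * s) ^ 2 := by ring
    rw [this]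
    have : 0 ≤ (y * u) ^ 2 * Real.exp (lam * s) ^ 2 := by positivity
    linarith
  have h1 : ∫ s in Ioc (-b) 0, Real.exp (ζ * (Real.exp (lam * s) * u)) * (1 - Real.cos (y * (Real.exp (lam * s) * u))) ≤ Inn lam ζ y u :=
    setIntegral_mono_set hint (Eventually.of_forall nn) (Eventually.of_forall fun s hs => hs.2)
  refine le_trans ?_ h1
  rw [← intervalIntegral.integral_of_le (by linarith), ← intervalIntegral.integral_const_mul]
  refine intervalIntegral.integral_mono_on (by linarith) (Continuous.intervalIntegrable (by fun_prop) _ _)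
    (Continuous.intervalIntegrable (by fun_prop) _ _) fun s hs => ?_
  have ec : Real.cos (|y| * u * Real.exp (lam * s)) = Real.cos (y * (Real.exp (lam * s) * u)) := by
    rw [← Real.cos_abs (y * (Real.exp (lam * s) * u)), abs_mul, abs_mul, Real.abs_exp, abs_of_pos hu]
    congr 1; ring
  rw [ec]
  refine mul_le_mul_of_nonneg_right (Real.exp_le_exp.2 ?_) (by linarith [Real.cos_le_one (y * (Real.exp (lam * s) * u))])
  have : -(lam * b) ≤ lam * s := by nlinarith [hs.1]
  gcongr

theorem Tht_ge [SigmaFinite μ] (h : HM (nuM μ lam)) (ζ y δ L : ℝ) (hfin : μ (Ioi δ) ≠ ⊤)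
    (hL : ∀ u, δ < u → L ≤ Inn lam ζ y u) : μ.real (Ioi δ) * L ≤ Tht (nuM μ lam) ζ y := by
  have hI := (nu_int (by fun_prop) (h.tht ζ y)).integral_prod_right
  unfold Tht
  rw [nu_eq' (by fun_prop) (h.tht ζ y)]
  have nn : ∀ u, 0 ≤ ∫ s in Iic (0:ℝ), Real.exp (ζ * (Real.exp (lam * s) * u)) * (1 - Real.cos (y * (Real.exp (lam * s) * u))) :=
    fun u => integral_nonneg fun s =>
      mul_nonneg (Real.exp_pos _).le (by linarith [Real.cos_le_one (y * (Real.exp (lam * s) * u))])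
  refine le_trans ?_ (setIntegral_le_integral (s := Ioi δ) hI (Eventually.of_forall nn))
  rw [← smul_eq_mul, ← setIntegral_const]
  exact setIntegral_mono_on (integrableOn_const hfin) hI.integrableOn measurableSet_Ioi fun u hu => hL u hu

theorem fin_Ioi (h : HM μ) (δ : ℝ) (hδ : 0 < δ) : μ (Ioi δ) ≠ ⊤ := by
  have h0 := h 0
  simp only [zero_mul, Real.exp_zero, mul_one] at h0
  have := h0.measure_norm_ge_lt_top (ε := δ ^ 2) (by positivity)
  refine ne_of_lt ((measure_mono fun u hu => ?_).trans_lt this)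
  have hu' : δ < u := hu
  simp only [mem_ofPred_eq, norm_pow, Real.norm_eq_abs, sq_abs]
  gcongr

theorem big_Ioi (h : HM μ) (hμinf : μ (Ioi (0 : ℝ)) = ⊤) (R : ℝ) : ∃ δ : ℝ, 0 < δ ∧ δ ≤ 1 ∧ R ≤ μ.real (Ioi δ) := by
  have e : (Ioi (0:ℝ)) = ⋃ n : ℕ, Ioi (1 / ((n : ℝ) + 1)) := by
    ext u
    simp only [mem_iUnion, mem_Ioi]
    constructor
    · intro hu; exact exists_nat_one_div_lt hu
    · rintro ⟨n, hn⟩; exact lt_trans (by positivity) hn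
  have mono : Monotone fun n : ℕ => Ioi (1 / ((n : ℝ) + 1)) := by
    intro n m hnm
    apply Ioi_subset_Ioi
    have : (n:ℝ) ≤ m := by exact_mod_cast hnm
    gcongr
  have t := tendsto_measure_iUnion_atTop (μ := μ) mono
  rw [← e, hμinf] at t
  have ev := (ENNReal.tendsto_nhds_top_iff_nnreal.1 t) (Real.toNNReal R)
  obtain ⟨n, hn⟩ := ev.exists
  refine ⟨1 / ((n:ℝ) + 1), by positivity, ?_, ?_⟩
  · rw [div_le_one (by positivity)]; linarith [(Nat.cast_nonneg n : (0:ℝ) ≤ n)]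
  · have hf := fin_Ioi h (1 / ((n:ℝ) + 1)) (by positivity)
    have := (ENNReal.toReal_le_toReal (by simp) hf).2 hn.le
    simp only [ENNReal.coe_toReal] at this
    exact (Real.le_coe_toNNReal R).trans this

theorem HD_nu [SigmaFinite μ] (h : HM μ) (hlam : 0 < lam) (hμinf : μ (Ioi (0 : ℝ)) = ⊤) : HD (nuM μ lam) := by
  have hn := HM_nu h hlam
  intro N
  obtain ⟨δ, hδ, hδ1, hm⟩ := big_Ioi h hμinf (2 * N * lam)
  set m := μ.real (Ioi δ) with hmdef
  have hm0 : 0 ≤ m := measureReal_nonneg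
  have hfin := fin_Ioi h δ hδ
  -- logarithmic bound
  have hlog : ∀ ζ, 0 ≤ ζ → ∀ y : ℝ, 1 ≤ |y| → m * ((Real.log |y| + Real.log δ - 2) / lam) ≤ Tht (nuM μ lam) ζ y := by
    intro ζ hζ y hy
    refine Tht_ge hn ζ y δ _ hfin fun u hu => ?_
    have hu0 : 0 < u := hδ.trans hu
    have hy0 : 0 < |y| := by linarith
    have hle : Real.log |y| + Real.log δ ≤ Real.log (|y| * u) := by
      rw [Real.log_mul hy0.ne' hu0.ne']
      gcongr
    by_cases hw : 1 ≤ |y| * u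
    · have hb : 0 ≤ Real.log (|y| * u) / lam := div_nonneg (Real.log_nonneg hw) hlam.le
      have i1 := Inn_ge hlam ζ y u _ hζ hu0 hb
      have i2 := osc_lower hlam (|y| * u) _ (by positivity) hb
      have e1 : lam * (Real.log (|y| * u) / lam) = Real.log (|y| * u) := by field_simp
      rw [e1, Real.exp_log (by positivity)] at i2
      have i3 : 0 ≤ ∫ s in (-(Real.log (|y| * u) / lam))..0, (1 - Real.cos (|y| * u * Real.exp (lam * s))) :=
        intervalIntegral.integral_nonneg (by linarith) fun s _ => by linarith [Real.cos_le_one (|y| * u * Real.exp (lam * s))]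
      have i4 : 1 ≤ Real.exp (ζ * (Real.exp (-(lam * (Real.log (|y| * u) / lam))) * u)) := Real.one_le_exp (by positivity)
      have i5 := le_mul_of_one_le_left i3 i4
      have e2 : 2 * (|y| * u) / (lam * (|y| * u)) = 2 / lam := by field_simp
      rw [e2] at i2
      have : (Real.log |y| + Real.log δ - 2) / lam ≤ Real.log (|y| * u) / lam - 2 / lam := by
        rw [← sub_div]; gcongr
      linarith
    · push Not at hw
      have h1 : Real.log (|y| * u) ≤ 0 := Real.log_nonpos (by positivity) hw.le
      have h2 : 0 ≤ Inn lam ζ y u := integral_nonneg fun s =>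
        mul_nonneg (Real.exp_pos _).le (by linarith [Real.cos_le_one (y * (Real.exp (lam * s) * u))])
      refine le_trans ?_ h2
      exact div_nonpos_of_nonpos_of_nonneg (by linarith) hlam.le
  set Q := m * ((2 - Real.log δ) / lam) with hQ
  have hQ0 : 0 ≤ Q := by
    have : Real.log δ ≤ 0 := Real.log_nonpos hδ.le hδ1
    have : 0 ≤ 2 - Real.log δ := by linarith
    positivity
  refine ⟨2 ^ N * Real.exp Q, by positivity, fun ζ hζ y => ?_⟩
  rw [← div_eq_mul_inv, le_div_iff₀ (by positivity)]
  by_cases hy : 1 ≤ |y|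
  · have hy0 : 0 < |y| := by linarith
    have h1 := hlog ζ hζ y hy
    have h2 : 0 ≤ Real.log |y| := Real.log_nonneg hy
    have h3 : 2 * N * Real.log |y| - Q ≤ Tht (nuM μ lam) ζ y := by
      have : 2 * N ≤ m / lam := by rwa [le_div_iff₀ hlam]
      have := mul_le_mul_of_nonneg_right this h2
      have e : m * ((Real.log |y| + Real.log δ - 2) / lam) = m / lam * Real.log |y| - Q := by rw [hQ]; ring
      linarith
    have h4 : (1 + y ^ 2) ^ N ≤ 2 ^ N * Real.exp (2 * N * Real.log |y|) := by
      have : Real.exp (2 * N * Real.log |y|) = (y ^ 2) ^ N := by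
        rw [show 2 * N * Real.log |y| = ((2 * N : ℕ) : ℝ) * Real.log |y| by push_cast; ring, Real.exp_nat_mul,
          Real.exp_log hy0, pow_mul, sq_abs]
      rw [this, ← mul_pow]
      have : 1 ≤ y ^ 2 := by rw [← sq_abs]; exact one_le_pow₀ hy
      gcongr
      linarith
    calc _ ≤ Real.exp (Q - 2 * N * Real.log |y|) * (2 ^ N * Real.exp (2 * N * Real.log |y|)) := by
          gcongr
          linarith
      _ = 2 ^ N * (Real.exp (Q - 2 * N * Real.log |y|) * Real.exp (2 * N * Real.log |y|)) := by ring
      _ = _ := by rw [← Real.exp_add]; ring_nf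
  · push Not at hy
    have h1 : Real.exp (- Tht (nuM μ lam) ζ y) ≤ 1 := Real.exp_le_one_iff.2 (by linarith [Tht_nonneg (ν := nuM μ lam) ζ y])
    have h2 : (1 + y ^ 2) ≤ 2 := by
      have : y ^ 2 ≤ 1 := by rw [← sq_abs]; exact pow_le_one₀ (abs_nonneg _) hy.le
      linarith
    calc _ ≤ 1 * (2:ℝ) ^ N := by gcongr
      _ ≤ Real.exp Q * 2 ^ N := by gcongr; exact Real.one_le_exp hQ0
      _ = _ := by ring

theorem b2_nu [SigmaFinite μ] (h : HM μ) (hlam : 0 < lam) (hμinf : μ (Ioi (0 : ℝ)) = ⊤) :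
    ∃ c δ : ℝ, 0 < c ∧ 0 < δ ∧ ∀ ζ : ℝ, 0 ≤ ζ → ∀ y : ℝ, c * Real.exp (δ * ζ) * min 1 (y ^ 2) ≤ Tht (nuM μ lam) ζ y := by
  have hn := HM_nu h hlam
  obtain ⟨δ, hδ, hδ1, hm⟩ := big_Ioi h hμinf 1
  obtain ⟨c, hc, hcb⟩ := osc_min hlam
  set m := μ.real (Ioi δ) with hmdef
  have hfin := fin_Ioi h δ hδ
  refine ⟨m * (c * δ ^ 2), Real.exp (-4) * δ, by positivity, by positivity, fun ζ hζ y => ?_⟩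
  have : m * (c * δ ^ 2) * Real.exp (Real.exp (-4) * δ * ζ) * min 1 (y ^ 2)
      = m * (Real.exp (Real.exp (-4) * δ * ζ) * (c * (δ ^ 2 * min 1 (y ^ 2)))) := by ring
  rw [this]
  refine Tht_ge hn ζ y δ _ hfin fun u hu => ?_
  have hu0 : 0 < u := hδ.trans hu
  by_cases hy : y = 0
  · subst hy
    simp [Inn]
  have hy0 : 0 < |y| := abs_pos.2 hy
  refine le_trans ?_ (Inn_ge hlam ζ y u (4 / lam) hζ hu0 (by positivity))
  have e : lam * (4 / lam) = 4 := by field_simp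
  rw [e]
  have h1 := hcb (|y| * u) (by positivity)
  have h2 : δ ^ 2 * min 1 (y ^ 2) ≤ min 1 ((|y| * u) ^ 2) := by
    rw [mul_pow, sq_abs]
    refine le_min ?_ ?_
    · exact mul_le_one₀ (pow_le_one₀ hδ.le hδ1) (by positivity) (min_le_left _ _)
    · calc _ ≤ u ^ 2 * y ^ 2 := by
            have := hu.le
            gcongr
            exact min_le_right _ _
        _ = _ := by ring
  have h3 : Real.exp (-4) * δ * ζ ≤ ζ * (Real.exp (-4) * u) := by
    have := hu.le
    calc _ = ζ * (Real.exp (-4) * δ) := by ring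
      _ ≤ _ := by gcongr
  calc _ ≤ Real.exp (ζ * (Real.exp (-4) * u)) * (c * min 1 ((|y| * u) ^ 2)) := by gcongr
    _ ≤ _ := by gcongr

structure Dat (M2 M4 N2 N4 : ℝ → ℝ) (lam A κ δ B0 γ : ℝ) : Prop where
  hlam : 0 < lam
  hA : 1 ≤ A
  hκ : 0 < κ
  hδ : 0 < δ
  g0 : 0 < γ
  g1 : γ < 1
  i2 : ∀ ζ, IntegrableOn (fun s => Real.exp (lam * s) ^ 2 * M2 (Real.exp (lam * s) * ζ)) (Iic 0)
  i4 : ∀ ζ, IntegrableOn (fun s => Real.exp (lam * s) ^ 4 * M4 (Real.exp (lam * s) * ζ)) (Iic 0)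
  e2 : ∀ ζ, N2 ζ = ∫ s in Iic (0:ℝ), Real.exp (lam * s) ^ 2 * M2 (Real.exp (lam * s) * ζ)
  e4 : ∀ ζ, N4 ζ = ∫ s in Iic (0:ℝ), Real.exp (lam * s) ^ 4 * M4 (Real.exp (lam * s) * ζ)
  n4 : ∀ a, 0 ≤ M4 a
  m4 : ∀ a b, 0 ≤ a → a ≤ b → M4 a ≤ M4 b + B0
  hB0 : 0 ≤ B0
  m2 : ∀ a b, 0 ≤ a → a ≤ b → M2 a ≤ A * M2 b
  gr : ∀ b, 0 ≤ b → κ * Real.exp (δ * b) ≤ M2 b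
  T1 : Tendsto (fun ξ => M4 ξ / (M2 (γ * ξ)) ^ 2) atTop (nhds 0)
  T2 : Tendsto (fun ξ => (Real.log (max (M4 ξ / M2 ξ) 1) + Real.log (Real.log (M2 ξ))) / ξ) atTop (nhds 0)

namespace Dat
variable {M2 M4 N2 N4 : ℝ → ℝ} {A κ δ B0 γ : ℝ}

theorem pos2 (D : Dat M2 M4 N2 N4 lam A κ δ B0 γ) (b : ℝ) (hb : 0 ≤ b) : 0 < M2 b :=
  lt_of_lt_of_le (by have := D.hκ; positivity) (D.gr b hb)

theorem gk (D : Dat M2 M4 N2 N4 lam A κ δ B0 γ) (b : ℝ) (hb : 0 ≤ b) : κ ≤ M2 b := by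
  refine le_trans ?_ (D.gr b hb)
  have := D.hκ; have := D.hδ
  exact le_mul_of_one_le_right (by positivity) (Real.one_le_exp (by positivity))

theorem low (D : Dat M2 M4 N2 N4 lam A κ δ B0 γ) : ∃ c, 0 < c ∧ ∀ s, s ≤ 0 → ∀ ζ, 0 ≤ ζ →
    c * (Real.exp (lam * s) ^ 2 * M2 (γ * (Real.exp (lam * s) * ζ))) ≤ N2 ζ := by
  have g0 := D.g0
  have hl := D.hlam
  have hA : 0 < A := by linarith [D.hA]
  have hlog : Real.log γ < 0 := Real.log_neg D.g0 D.g1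
  obtain ⟨a, ha⟩ : ∃ a, a = - Real.log γ / lam := ⟨_, rfl⟩
  have ha0 : 0 < a := by rw [ha]; exact div_pos (by linarith) D.hlam
  have hla : lam * a = - Real.log γ := by rw [ha]; field_simp
  refine ⟨a * γ ^ 2 / A, by positivity, fun s hs ζ hζ => ?_⟩
  rw [D.e2]
  have pz : ∀ t, 0 ≤ Real.exp (lam * t) ^ 2 * M2 (Real.exp (lam * t) * ζ) := fun t =>
    mul_nonneg (by positivity) (D.pos2 _ (by positivity)).le
  have sub : Icc (s - a) s ⊆ Iic (0:ℝ) := fun t ht => ht.2.trans hs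
  have h1 : ∫ t in Icc (s - a) s, Real.exp (lam * t) ^ 2 * M2 (Real.exp (lam * t) * ζ)
      ≤ ∫ t in Iic (0:ℝ), Real.exp (lam * t) ^ 2 * M2 (Real.exp (lam * t) * ζ) :=
    setIntegral_mono_set (D.i2 ζ) (Eventually.of_forall pz) (Eventually.of_forall sub)
  refine le_trans ?_ h1
  have h2 := setIntegral_mono_on (μ := volume) (s := Icc (s - a) s)
    (f := fun _ => (γ * Real.exp (lam * s)) ^ 2 * (M2 (γ * (Real.exp (lam * s) * ζ)) / A))
    (integrableOn_const (by simp))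
    ((D.i2 ζ).mono_set sub) measurableSet_Icc (fun t ht => ?_)
  · refine le_trans (le_of_eq ?_) h2
    rw [setIntegral_const, smul_eq_mul, Measure.real, Real.volume_Icc, ENNReal.toReal_ofReal (by linarith)]
    ring
  · have k1 : γ * Real.exp (lam * s) ≤ Real.exp (lam * t) := by
      rw [← Real.exp_log g0, ← Real.exp_add, Real.exp_le_exp]
      have := mul_le_mul_of_nonneg_left ht.1 hl.le
      linarith
    have k2 : M2 (γ * (Real.exp (lam * s) * ζ)) / A ≤ M2 (Real.exp (lam * t) * ζ) := by
      rw [div_le_iff₀ hA, mul_comm _ A]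
      refine D.m2 _ _ (by positivity) ?_
      rw [← mul_assoc]; gcongr
    have k3 := D.pos2 (γ * (Real.exp (lam * s) * ζ)) (by positivity)
    gcongr

theorem n2_top (D : Dat M2 M4 N2 N4 lam A κ δ B0 γ) : Tendsto N2 atTop atTop := by
  obtain ⟨c, hc, hl⟩ := D.low
  have hk := D.hκ
  have hd := D.hδ
  have g0 := D.g0
  have t : Tendsto (fun ζ : ℝ => c * κ * Real.exp (δ * γ * ζ)) atTop atTop :=
    (Real.tendsto_exp_atTop.comp (tendsto_id.const_mul_atTop (by positivity : 0 < δ * γ))).const_mul_atTop (by positivity)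
  refine tendsto_atTop_mono' _ ?_ t
  filter_upwards [eventually_ge_atTop 0] with ζ hζ
  have h1 := hl 0 le_rfl ζ hζ
  simp only [mul_zero, Real.exp_zero, one_pow, one_mul] at h1
  refine le_trans ?_ h1
  have h2 := D.gr (γ * ζ) (by positivity)
  rw [mul_assoc, mul_assoc δ]
  gcongr

theorem m2_top (D : Dat M2 M4 N2 N4 lam A κ δ B0 γ) : Tendsto M2 atTop atTop := by
  have t : Tendsto (fun ζ : ℝ => κ * Real.exp (δ * ζ)) atTop atTop :=
    (Real.tendsto_exp_atTop.comp (tendsto_id.const_mul_atTop D.hδ)).const_mul_atTop D.hκ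
  refine tendsto_atTop_mono' _ ?_ t
  filter_upwards [eventually_ge_atTop 0] with ζ hζ using D.gr ζ hζ

theorem ie (D : Dat M2 M4 N2 N4 lam A κ δ B0 γ) (k : ℕ) (hk : 0 < k) :
    IntegrableOn (fun s => Real.exp (lam * s) ^ k) (Iic 0) := by
  have hl := D.hlam
  refine (int_exp (k * lam) (by positivity)).congr (Eventually.of_forall fun s => ?_)
  simp only
  rw [← Real.exp_nat_mul]; ring_nf

theorem ev4 (D : Dat M2 M4 N2 N4 lam A κ δ B0 γ) {P : ℝ → Prop} (hP : ∀ᶠ ξ in atTop, P ξ) :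
    ∃ B, 0 ≤ B ∧ ∀ v, 0 ≤ v → P v ∨ M4 v ≤ B := by
  obtain ⟨X, hX⟩ := eventually_atTop.1 hP
  refine ⟨M4 (max X 0) + B0, add_nonneg (D.n4 _) D.hB0, fun v hv => ?_⟩
  rcases le_total X v with h | h
  · exact Or.inl (hX v h)
  · exact Or.inr (D.m4 _ _ hv (h.trans (le_max_left _ _)))

theorem hr (D : Dat M2 M4 N2 N4 lam A κ δ B0 γ) : Tendsto (fun ζ => N4 ζ / (N2 ζ) ^ 2) atTop (nhds 0) := by
  obtain ⟨c, hc, hl⟩ := D.low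
  have hA : 0 < A := by linarith [D.hA]
  have n4 : ∀ ζ, 0 ≤ N4 ζ := fun ζ => by
    rw [D.e4]; exact integral_nonneg fun s => mul_nonneg (by positivity) (D.n4 _)
  -- main bound
  have main : ∀ ε, 0 < ε → ∃ B, 0 ≤ B ∧ ∀ ζ, 0 ≤ ζ → N4 ζ ≤ ε * (A / c) * N2 ζ ^ 2 + B := by
    intro ε hε
    have ev : ∀ᶠ ξ in atTop, M4 ξ ≤ ε * M2 (γ * ξ) ^ 2 := by
      filter_upwards [D.T1.eventually (gt_mem_nhds hε), eventually_ge_atTop 0] with ξ h1 h2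
      have := D.pos2 (γ * ξ) (mul_nonneg D.g0.le h2)
      exact ((div_lt_iff₀ (by positivity)).1 h1).le
    obtain ⟨B, hB, hb⟩ := D.ev4 ev
    refine ⟨B * ∫ s in Iic (0:ℝ), Real.exp (lam * s) ^ 4,
      mul_nonneg hB (integral_nonneg fun s => by positivity), fun ζ hζ => ?_⟩
    have q : ∫ s in Iic (0:ℝ), Real.exp (lam * s) ^ 4 * M4 (Real.exp (lam * s) * ζ)
      ≤ ∫ s in Iic (0:ℝ), (ε * (A / c) * N2 ζ * (Real.exp (lam * s) ^ 2 * M2 (Real.exp (lam * s) * ζ))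
        + B * Real.exp (lam * s) ^ 4) := by
      refine setIntegral_mono_on (D.i4 ζ) (((D.i2 ζ).const_mul _).add ((D.ie 4 (by norm_num)).const_mul _))
        measurableSet_Iic fun s hs => ?_
      set E := Real.exp (lam * s) with hE
      have hE0 : 0 < E := Real.exp_pos _
      have l1 := hl s hs ζ hζ
      rw [← hE] at l1
      have p1 := D.pos2 (γ * (E * ζ)) (by have := D.g0; positivity)
      have p2 := D.pos2 (E * ζ) (by positivity)
      have l2 : M2 (γ * (E * ζ)) ≤ A * M2 (E * ζ) := D.m2 _ _ (by have := D.g0; positivity)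
        (mul_le_of_le_one_left (by positivity) D.g1.le)
      have nn : 0 ≤ N2 ζ := le_trans (by positivity) l1
      have l3 : E ^ 2 * M2 (γ * (E * ζ)) ≤ N2 ζ / c := by
        rw [le_div_iff₀ hc, mul_comm]; exact l1
      rcases hb (E * ζ) (by positivity) with h | h
      · calc E ^ 4 * M4 (E * ζ) ≤ E ^ 4 * (ε * M2 (γ * (E * ζ)) ^ 2) := by gcongr
          _ = ε * ((E ^ 2 * M2 (γ * (E * ζ))) * (E ^ 2 * M2 (γ * (E * ζ)))) := by ring
          _ ≤ ε * ((N2 ζ / c) * (E ^ 2 * (A * M2 (E * ζ)))) := by gcongr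
          _ = ε * (A / c) * N2 ζ * (E ^ 2 * M2 (E * ζ)) := by ring
          _ ≤ _ := le_add_of_nonneg_right (by positivity)
      · calc E ^ 4 * M4 (E * ζ) ≤ E ^ 4 * B := by gcongr
          _ = B * E ^ 4 := by ring
          _ ≤ _ := le_add_of_nonneg_left (by positivity)
    rw [integral_add ((D.i2 ζ).const_mul _) ((D.ie 4 (by norm_num)).const_mul _), integral_const_mul,
      integral_const_mul, ← D.e2, ← D.e4] at q
    refine q.trans (le_of_eq (by ring))
  refine tendsto_order.2 ⟨fun a ha => Eventually.of_forall fun ζ => lt_of_lt_of_le ha (div_nonneg (n4 ζ) (sq_nonneg _)), fun a ha => ?_⟩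
  obtain ⟨B, hB, hm⟩ := main (a / 2 / (A / c)) (by positivity)
  filter_upwards [eventually_ge_atTop 0, D.n2_top.eventually_ge_atTop 1, D.n2_top.eventually_gt_atTop (B / (a / 2))] with ζ h0 h1 h2
  rw [div_lt_iff₀ (by positivity)]
  have := hm ζ h0
  have e : a / 2 / (A / c) * (A / c) = a / 2 := by field_simp
  rw [e] at this
  rw [div_lt_iff₀ (by positivity)] at h2
  nlinarith [mul_le_mul_of_nonneg_left h1 (by positivity : 0 ≤ a / 2 * N2 ζ)]

theorem t2 (D : Dat M2 M4 N2 N4 lam A κ δ B0 γ) (ε : ℝ) (hε : 0 < ε) :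
    ∀ᶠ ξ in atTop, M4 ξ ≤ Real.exp (ε * ξ) * M2 ξ ∧ M2 ξ ≤ Real.exp (Real.exp (ε * ξ)) := by
  filter_upwards [D.T2.eventually (gt_mem_nhds hε), eventually_gt_atTop 0,
    D.m2_top.eventually_ge_atTop (Real.exp 1)] with ξ h1 h2 h3
  rw [div_lt_iff₀ h2] at h1
  have p2 := D.pos2 ξ h2.le
  have l1 : 1 ≤ Real.log (M2 ξ) := (Real.le_log_iff_exp_le p2).2 h3
  have l2 : 0 ≤ Real.log (Real.log (M2 ξ)) := Real.log_nonneg l1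
  have l3 : 0 ≤ Real.log (max (M4 ξ / M2 ξ) 1) := Real.log_nonneg (le_max_right _ _)
  constructor
  · have : max (M4 ξ / M2 ξ) 1 ≤ Real.exp (ε * ξ) :=
      (Real.log_le_iff_le_exp (lt_of_lt_of_le one_pos (le_max_right _ _))).1 (by linarith)
    exact (div_le_iff₀ p2).1 ((le_max_left _ _).trans this)
  · refine (Real.log_le_iff_le_exp p2).1 ((Real.log_le_iff_le_exp (by linarith)).1 (by linarith))

theorem h4 (D : Dat M2 M4 N2 N4 lam A κ δ B0 γ) (ε : ℝ) (hε : 0 < ε) :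
    ∃ C, 0 < C ∧ ∀ᶠ ζ in atTop, N4 ζ ≤ C * Real.exp (ε * ζ) * N2 ζ := by
  obtain ⟨B, hB, hb⟩ := D.ev4 (D.t2 ε hε)
  have hk := D.hκ
  have hl := D.hlam
  refine ⟨1 + B / κ, by positivity, ?_⟩
  filter_upwards [eventually_ge_atTop 0] with ζ hζ
  rw [D.e4, D.e2, ← integral_const_mul]
  refine setIntegral_mono_on (D.i4 ζ) ((D.i2 ζ).const_mul _) measurableSet_Iic fun s hs => ?_
  set E := Real.exp (lam * s) with hE
  have hE0 : 0 < E := Real.exp_pos _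
  have hE1 : E ≤ 1 := Real.exp_le_one_iff.2 (mul_nonpos_of_nonneg_of_nonpos hl.le hs)
  have p2 := D.pos2 (E * ζ) (by positivity)
  have x1 : Real.exp (ε * (E * ζ)) ≤ Real.exp (ε * ζ) := by
    rw [Real.exp_le_exp]; gcongr; exact mul_le_of_le_one_left hζ hE1
  have x2 : 1 ≤ Real.exp (ε * ζ) := Real.one_le_exp (by positivity)
  have key : M4 (E * ζ) ≤ (1 + B / κ) * Real.exp (ε * ζ) * M2 (E * ζ) := by
    rcases hb (E * ζ) (by positivity) with ⟨h, _⟩ | h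
    · calc M4 (E * ζ) ≤ 1 * Real.exp (ε * ζ) * M2 (E * ζ) := by
            rw [one_mul]; exact h.trans (by gcongr)
        _ ≤ _ := by
            gcongr; exact le_add_of_nonneg_right (by positivity)
    · calc M4 (E * ζ) ≤ B := h
        _ = B / κ * 1 * κ := by field_simp
        _ ≤ B / κ * Real.exp (ε * ζ) * M2 (E * ζ) := by
            have := D.gk (E * ζ) (by positivity)
            gcongr
        _ ≤ _ := by
            gcongr; linarith
  calc E ^ 4 * M4 (E * ζ) ≤ E ^ 2 * ((1 + B / κ) * Real.exp (ε * ζ) * M2 (E * ζ)) := by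
        refine mul_le_mul (pow_le_pow_of_le_one hE0.le hE1 (by norm_num)) key (D.n4 _) (by positivity)
    _ = _ := by ring

theorem h2 (D : Dat M2 M4 N2 N4 lam A κ δ B0 γ) (ε : ℝ) (hε : 0 < ε) :
    ∃ C, 0 < C ∧ ∀ᶠ ζ in atTop, N2 ζ ≤ C * Real.exp (Real.exp (ε * ζ)) := by
  have hA : 0 < A := by linarith [D.hA]
  have hl := D.hlam
  have hI : 0 ≤ ∫ s in Iic (0:ℝ), Real.exp (lam * s) ^ 2 := integral_nonneg fun s => by positivity
  refine ⟨A * (∫ s in Iic (0:ℝ), Real.exp (lam * s) ^ 2) + 1, by positivity, ?_⟩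
  filter_upwards [eventually_ge_atTop 0, D.t2 ε hε] with ζ hζ ht
  have q : N2 ζ ≤ A * M2 ζ * ∫ s in Iic (0:ℝ), Real.exp (lam * s) ^ 2 := by
    rw [D.e2, ← integral_const_mul]
    refine setIntegral_mono_on (D.i2 ζ) ((D.ie 2 (by norm_num)).const_mul _) measurableSet_Iic fun s hs => ?_
    have hE1 : Real.exp (lam * s) ≤ 1 := Real.exp_le_one_iff.2 (mul_nonpos_of_nonneg_of_nonpos hl.le hs)
    have := D.m2 (Real.exp (lam * s) * ζ) ζ (by positivity) (mul_le_of_le_one_left hζ hE1)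
    rw [mul_comm]; gcongr
  refine q.trans ?_
  calc _ = A * (∫ s in Iic (0:ℝ), Real.exp (lam * s) ^ 2) * M2 ζ := by ring
    _ ≤ A * (∫ s in Iic (0:ℝ), Real.exp (lam * s) ^ 2) * Real.exp (Real.exp (ε * ζ)) := by
        gcongr; exact ht.2
    _ ≤ _ := by gcongr; linarith

end Dat

theorem KM_near (h : HM μ) (k : ℕ) (hk : Even k) (a b : ℝ) (ha : 0 ≤ a) (hab : a ≤ b) :
    KM μ (k + 2) a ≤ KM μ (k + 2) b + KM μ (k + 2) 0 := by
  unfold KM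
  rw [← integral_add (h.km k b) (h.km k 0)]
  refine integral_mono (h.km k a) ((h.km k b).add (h.km k 0)) fun v => ?_
  have e : 0 ≤ v ^ (k + 2) := (hk.add (by decide)).pow_nonneg v
  simp only [Pi.add_apply, zero_mul, Real.exp_zero, mul_one]
  rcases le_total 0 v with hv | hv
  · have : v ^ (k + 2) * Real.exp (a * v) ≤ v ^ (k + 2) * Real.exp (b * v) := by gcongr
    linarith
  · have h1 : v ^ (k + 2) * Real.exp (a * v) ≤ v ^ (k + 2) * 1 := by
      gcongr; exact Real.exp_le_one_iff.2 (mul_nonpos_of_nonneg_of_nonpos ha hv)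
    have h2 : 0 ≤ v ^ (k + 2) * Real.exp (b * v) := by positivity
    linarith

theorem KM_nn (k : ℕ) (hk : Even k) (a : ℝ) : 0 ≤ KM μ k a :=
  integral_nonneg fun v => mul_nonneg (hk.pow_nonneg v) (Real.exp_pos _).le

theorem KM_gr (h : HM μ) (δ : ℝ) (hδ : 0 < δ) (b : ℝ) (hb : 0 ≤ b) :
    δ ^ 2 * μ.real (Ioi δ) * Real.exp (δ * b) ≤ KM μ 2 b := by
  have hf := fin_Ioi h δ hδ
  have hi := h.km 0 b
  simp only [zero_add] at hi
  have h1 : ∫ v in Ioi δ, v ^ 2 * Real.exp (b * v) ∂μ ≤ KM μ 2 b :=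
    setIntegral_le_integral hi (Eventually.of_forall fun v => by positivity)
  refine le_trans ?_ h1
  have h2 := setIntegral_mono_on (μ := μ) (s := Ioi δ) (f := fun _ => δ ^ 2 * Real.exp (b * δ))
    (integrableOn_const hf) hi.integrableOn measurableSet_Ioi (fun v hv => ?_)
  · refine le_trans (le_of_eq ?_) h2
    rw [setIntegral_const, smul_eq_mul]
    ring_nf
  · have : δ < v := hv
    gcongr

theorem dat [SigmaFinite μ] (h : HM μ) (hlam : 0 < lam) (hμinf : μ (Ioi (0 : ℝ)) = ⊤) (γ : ℝ) (hγ : γ ∈ Ioo (0:ℝ) 1)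
    (hT1 : Tendsto (fun ξ => KM μ 4 ξ / (KM μ 2 (γ * ξ)) ^ 2) atTop (nhds 0))
    (hT2 : Tendsto (fun ξ => (Real.log (max (KM μ 4 ξ / KM μ 2 ξ) 1) + Real.log (Real.log (KM μ 2 ξ))) / ξ) atTop (nhds 0)) :
    ∃ A κ δ B0, Dat (KM μ 2) (KM μ 4) (KM (nuM μ lam) 2) (KM (nuM μ lam) 4) lam A κ δ B0 γ := by
  have hn := HM_nu h hlam
  obtain ⟨δ, hδ, hδ1, hm⟩ := big_Ioi h hμinf 1
  have hm0 : 0 < μ.real (Ioi δ) := by linarith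
  have hκ : 0 < δ ^ 2 * μ.real (Ioi δ) := by positivity
  have nn := KM_nn (μ := μ) 2 (by decide) 0
  refine ⟨1 + KM μ 2 0 / (δ ^ 2 * μ.real (Ioi δ)), δ ^ 2 * μ.real (Ioi δ), δ, KM μ 4 0, ?_⟩
  refine ⟨hlam, ?_, hκ, hδ, hγ.1, hγ.2, kMs_int hn 0, kMs_int hn 2, kMs hn 0, kMs hn 2, KM_nn 4 (by decide),
    KM_near h 2 (by decide), KM_nn 4 (by decide) 0, fun a b ha hab => ?_, KM_gr h δ hδ, hT1, hT2⟩
  · have : 0 ≤ KM μ 2 0 / (δ ^ 2 * μ.real (Ioi δ)) := by positivity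
    linarith
  · have h1 := KM_near h 0 (by decide) a b ha hab
    simp only [zero_add] at h1
    have h2 := KM_gr h δ hδ b (ha.trans hab)
    have h3 : δ ^ 2 * μ.real (Ioi δ) ≤ KM μ 2 b := le_trans (le_mul_of_one_le_right hκ.le (Real.one_le_exp (mul_nonneg hδ.le (ha.trans hab)))) h2
    have h4 : KM μ 2 0 ≤ KM μ 2 0 / (δ ^ 2 * μ.real (Ioi δ)) * KM μ 2 b := by
      rw [div_mul_eq_mul_div, le_div_iff₀ hκ]
      gcongr
    linarith

end OUaux

/-- Corollary 3.1, statement (3): the invariant distribution density of the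
stationary Lévy driven Ornstein–Uhlenbeck process (kernel `f(s) = e^{λs}` on `(−∞,0]`)
is well defined, `C^∞` with bounded derivatives, and satisfies
`p(x)·√(2π𝓜₂(ζ(x)))·exp(xζ(x) − 𝓜₀(ζ(x))) → 1` as `x → +∞`. -/
theorem OU_invariant_density_asymptotics
    (μ : Measure ℝ)
    (hμ0 : μ {0} = 0)
    (hμint : Integrable (fun u : ℝ => min 1 (u ^ 2)) μ)
    (hμinf : μ (Set.Ioi (0 : ℝ)) = ⊤)
    (hμexp : ∀ C : ℝ, Integrable (fun u : ℝ => Real.exp (C * u)) (μ.restrict {u : ℝ | 1 ≤ |u|}))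
    (γ : ℝ) (hγ : γ ∈ Set.Ioo (0 : ℝ) 1)
    (hT1 : Tendsto (fun ξ => levyM μ 4 ξ / (levyM μ 2 (γ * ξ)) ^ 2) atTop (nhds 0))
    (hT2 : Tendsto
      (fun ξ => (Real.log (max (levyM μ 4 ξ / levyM μ 2 ξ) 1)
        + Real.log (Real.log (levyM μ 2 ξ))) / ξ) atTop (nhds 0))
    (lam : ℝ) (hlam : 0 < lam)
    (ζ : ℝ → ℝ)
    (hζ : ∀ x : ℝ, 0 ≤ x → 0 ≤ ζ x ∧
      kernelM μ (Set.Iic 0) (fun s => Real.exp (lam * s)) 1 (ζ x) = x)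
    (p : ℝ → ℝ)
    (hp : ∀ x : ℝ, p x = (1 / (2 * Real.pi)) *
      (∫ z : ℝ, Complex.exp (Complex.I * (x : ℂ) * (z : ℂ)
        + kernelPsi μ (Set.Iic 0) (fun s => Real.exp (lam * s)) (z : ℂ))).re) :
    (∀ k : ℕ, ∀ x : ℝ, Integrable (fun z : ℝ => (z : ℂ) ^ k *
      Complex.exp (Complex.I * (x : ℂ) * (z : ℂ)
        + kernelPsi μ (Set.Iic 0) (fun s => Real.exp (lam * s)) (z : ℂ))))
    ∧ ContDiff ℝ (⊤ : ℕ∞) p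
    ∧ (∀ n : ℕ, ∃ C : ℝ, ∀ x : ℝ, |iteratedDeriv n p x| ≤ C)
    ∧ Tendsto (fun x => p x
        * Real.sqrt (2 * Real.pi * kernelM μ (Set.Iic 0) (fun s => Real.exp (lam * s)) 2 (ζ x))
        * Real.exp (x * ζ x - kernelM μ (Set.Iic 0) (fun s => Real.exp (lam * s)) 0 (ζ x)))
        atTop (nhds 1) := by
  haveI := OUaux.sfin hμ0 hμint
  have h := OUaux.HM_mu hμint hμexp
  have hn := OUaux.HM_nu h hlam
  have hd := OUaux.HD_nu h hlam hμinf
  simp only [OUaux.kPsi hn] at hp ⊢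
  simp only [OUaux.kM0 hn, OUaux.kM1 hn, OUaux.kM2 hn] at hζ ⊢
  have l2 : ∀ ξ, levyM μ 2 ξ = OUaux.KM μ 2 ξ := OUaux.levyM_eq 0
  have l4 : ∀ ξ, levyM μ 4 ξ = OUaux.KM μ 4 ξ := OUaux.levyM_eq 2
  simp only [l2, l4] at hT1 hT2
  obtain ⟨A, κ, δ', B0, D⟩ := OUaux.dat h hlam hμinf γ hγ hT1 hT2
  obtain ⟨c, δ, hc, hδ, hb⟩ := OUaux.b2_nu h hlam hμinf
  have hL := OUaux.laplace hn hd c δ hc hδ hb D.hr D.h4 D.h2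
  obtain ⟨s1, s2⟩ := OUaux.smooth hn hd p hp
  exact ⟨fun k x => OUaux.int_k hn hd k x, s1, s2, OUaux.asym hn hd hL ζ hζ p hp⟩
end
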